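/- arXiv:1705.06372 — 5 statements merged into one kernel-verified Lean document; each statement's English description precedes it below -/
import Mathlib

section
/- Let q = 2^h, let 2 ≤ t < q, and let A be an elation KM-arc of type t in PG(2,q) with elation line m (for t = 2 this means that A is a hyperoval stabilised by a non-trivial elation with axis m). Then m is a t-secant to A, i.e. m contains exactly t points of A. -/
open scoped Classical

noncomputable section

variable {K : Type*} [Field K]

/-- The absolute trace-style sum `x + x² + x⁴ + ⋯ + x^(2^(h-1))`
(it lands in the prime subfield `F₂` when `|K| = 2^h`). -/
def Tr (h : ℕ) (x : K) : K := ∑ i ∈ Finset.range h, x ^ 2 ^ i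

/-- `F₂`-independence of a tuple of elements of a field of characteristic two:
no nontrivial combination with coefficients `0`/`1` vanishes. -/
def F2Indep {n : ℕ} (v : Fin n → K) : Prop :=
  ∀ c : Fin n → K, (∀ i, c i = 0 ∨ c i = 1) → ∑ i, c i * v i = 0 → ∀ i, c i = 0

/-- The `F₂`-span of a tuple of elements of a field of characteristic two. -/
def F2Span {n : ℕ} (v : Fin n → K) : Set K :=
  {x | ∃ c : Fin n → K, (∀ i, c i = 0 ∨ c i = 1) ∧ x = ∑ i, c i * v i}

/-- `α·S` for an additive subgroup `S` of the field. -/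
def smulSub (α : K) (S : AddSubgroup K) : AddSubgroup K :=
  S.map (AddMonoidHom.mulLeft α)

/-- Points of `PG(2,q)`: one-dimensional subspaces of `K³`. -/
abbrev Pt (K : Type*) [Field K] := Projectivization K (Fin 3 → K)

/-- The point `(a : b : c)` of `PG(2,q)`. -/
def pt3 (a b c : K) (habc : ¬(a = 0 ∧ b = 0 ∧ c = 0)) : Pt K :=
  Projectivization.mk K ![a, b, c] (fun h0 => habc
    ⟨by simpa using congrFun h0 0, by simpa using congrFun h0 1, by simpa using congrFun h0 2⟩)

/-- The point `(a : b)` of `PG(1,q)`. -/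
def pt2 (a b : K) (hab : ¬(a = 0 ∧ b = 0)) : Projectivization K (Fin 2 → K) :=
  Projectivization.mk K ![a, b] (fun h0 => hab
    ⟨by simpa using congrFun h0 0, by simpa using congrFun h0 1⟩)

/-- An `F₂`-linear set of points of `PG(1,q)`: in characteristic two, the
`F₂`-subspaces of `K²` are exactly its additive subgroups. -/
def IsF2Linear (T : Set (Projectivization K (Fin 2 → K))) : Prop :=
  ∃ U : AddSubgroup (Fin 2 → K),
    T = {P | ∃ u : Fin 2 → K, ∃ hu : u ≠ 0, u ∈ U ∧ Projectivization.mk K u hu = P}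

/-- Lines of `PG(2,q)`: two-dimensional subspaces of `K³`. -/
def IsLine (L : Submodule K (Fin 3 → K)) : Prop := Module.finrank K L = 2

/-- Incidence of a point with a line. -/
def OnLine (P : Pt K) (L : Submodule K (Fin 3 → K)) : Prop := P.submodule ≤ L

/-- The number of points of `A` lying on the line `L`. -/
def secantCount (A : Set (Pt K)) (L : Submodule K (Fin 3 → K)) : ℕ :=
  {P ∈ A | OnLine P L}.ncard

/-- A KM-arc of type `t`: `q+t` points meeting every line in `0`, `2` or `t` points. -/
def IsKMArc (q t : ℕ) (A : Set (Pt K)) : Prop :=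
  A.ncard = q + t ∧ ∀ L : Submodule K (Fin 3 → K), IsLine L →
    secantCount A L = 0 ∨ secantCount A L = 2 ∨ secantCount A L = t

/-- The projectivity of `PG(2,q)` induced by an element of `GL(3,q)`. -/
def projMap (f : (Fin 3 → K) ≃ₗ[K] (Fin 3 → K)) : Pt K → Pt K :=
  Projectivization.map f.toLinearMap f.injective

/-- `f` induces an elation with axis `L` and centre `R`: it fixes every point of `L`
and maps every line through `R` to itself. -/
def IsElation (f : (Fin 3 → K) ≃ₗ[K] (Fin 3 → K)) (L : Submodule K (Fin 3 → K))
    (R : Pt K) : Prop :=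
  IsLine L ∧ OnLine R L ∧ (∀ P : Pt K, OnLine P L → projMap f P = P) ∧
    ∀ M : Submodule K (Fin 3 → K), IsLine M → OnLine R M →
      ∀ P : Pt K, OnLine P M → OnLine (projMap f P) M

/-- `f` induces an elation with axis `L` (for some centre on `L`). -/
def IsElationAxis (f : (Fin 3 → K) ≃ₗ[K] (Fin 3 → K)) (L : Submodule K (Fin 3 → K)) : Prop :=
  ∃ R : Pt K, IsElation f L R

/-- The projectivity induced by `f` stabilises the point set `A`. -/
def Stabilises (f : (Fin 3 → K) ≃ₗ[K] (Fin 3 → K)) (A : Set (Pt K)) : Prop :=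
  projMap f '' A = A

/-- `N` lies on every `t`-secant of `A` (i.e. `N` is the `t`-nucleus). -/
def IsNucleus (t : ℕ) (A : Set (Pt K)) (N : Pt K) : Prop :=
  ∀ L : Submodule K (Fin 3 → K), IsLine L → secantCount A L = t → OnLine N L

/-- An elation KM-arc of type `t` with `t`-nucleus `N` and elation line `linf`:
for every `t`-secant `L ≠ linf`, the group of elations with axis `linf` stabilising `A`
acts transitively on `A ∩ L`. -/
def IsElationKMArc (q t : ℕ) (A : Set (Pt K)) (N : Pt K)
    (linf : Submodule K (Fin 3 → K)) : Prop :=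
  IsKMArc q t A ∧ IsLine linf ∧ OnLine N linf ∧ IsNucleus t A N ∧
    ∀ L : Submodule K (Fin 3 → K), IsLine L → secantCount A L = t → L ≠ linf →
      ∀ P ∈ A, OnLine P L → ∀ Q ∈ A, OnLine Q L →
        ∃ f : (Fin 3 → K) ≃ₗ[K] (Fin 3 → K),
          IsElationAxis f linf ∧ Stabilises f A ∧ projMap f P = Q

/-- A translation KM-arc with translation line `l`: the group of elations with axis `l`
stabilising `A` acts transitively on `A \ l`. -/
def IsTranslationKMArc (A : Set (Pt K)) (l : Submodule K (Fin 3 → K)) : Prop :=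
  IsLine l ∧ ∀ P ∈ A, ¬OnLine P l → ∀ Q ∈ A, ¬OnLine Q l →
    ∃ f : (Fin 3 → K) ≃ₗ[K] (Fin 3 → K),
      IsElationAxis f l ∧ Stabilises f A ∧ projMap f P = Q

/-- The line `X = 0` of `PG(2,q)`. -/
def lineX0 (K : Type*) [Field K] : Submodule K (Fin 3 → K) :=
  LinearMap.ker (LinearMap.proj (R := K) (φ := fun _ : Fin 3 => K) 0)

/-- The line `Y = aX` of `PG(2,q)`. -/
def lineYaX (a : K) : Submodule K (Fin 3 → K) where
  carrier := {v | v 1 = a * v 0}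
  add_mem' := by
    intro v w hv hw
    simp only [Set.mem_setOf_eq, Pi.add_apply] at hv hw ⊢
    rw [hv, hw]; ring
  zero_mem' := by simp
  smul_mem' := by
    intro c v hv
    simp only [Set.mem_setOf_eq, Pi.smul_apply, smul_eq_mul] at hv ⊢
    rw [hv]; ring

/-- The point set of the `q/8`-construction (Theorem 4.4 of the paper), built from
`F₂`-independent `a 0, a 1, a 2` and coset representatives `b 0, b 1, b 2`. -/
def q8Arc (h : ℕ) (a b : Fin 3 → K) : Set (Pt K) :=
  {P | ∃ x : K, (∀ i, Tr h (a i ^ 2 * x) = 0) ∧ P = pt3 0 1 x (by simp)}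
    ∪ {P | ∃ l : Fin 3 → K, (∀ i, l i = 0 ∨ l i = 1) ∧ ∃ s : K, (∀ i, Tr h (a i * s) = 0) ∧
        P = pt3 1 (l 0 * a 0 + l 1 * a 1 + l 2 * a 2)
          ((l 0 + l 1 + l 2 + l 1 * l 2) * b 0 + (l 1 + l 2 + l 0 * l 2) * b 1
            + (l 2 + l 0 * l 1) * b 2 + s) (by simp)}

/-- The point set of the `q/16`-construction (Theorem 5.2 of the paper). -/
def q16Arc (h : ℕ) (a : Fin 4 → K) (α : K) (b : Fin 3 → K) : Set (Pt K) :=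
  {P | ∃ x : K, Tr h (a 0 * (a 0 + a 3) * x) = 0 ∧ Tr h (a 1 * (a 1 + a 3) * x) = 0 ∧
      Tr h (a 2 * (a 2 + a 3) * x) = 0 ∧ Tr h (a 3 * α * x) = 1 ∧ P = pt3 0 1 x (by simp)}
    ∪ {P | ∃ l : Fin 4 → K, (∀ i, l i = 0 ∨ l i = 1) ∧ ∃ s : K, (∀ i, Tr h (a i * s) = 0) ∧
        P = pt3 1 (l 0 * a 0 + l 1 * a 1 + l 2 * a 2 + l 3 * a 3)
          ((l 0 + l 1 + l 2 + l 1 * l 2) * b 0 + (l 1 + l 2 + l 0 * l 2) * b 1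
            + (l 2 + l 0 * l 1) * b 2 + s) (by simp)}

/-- The semilinear collineation of `PG(2,q)` sending the point spanned by `v`
to the point spanned by `M (ψ ∘ v)`. -/
def frobMap (ψ : K ≃+* K) (M : (Fin 3 → K) ≃ₗ[K] (Fin 3 → K)) (P : Pt K) : Pt K :=
  Projectivization.mk K (M fun i => ψ (P.rep i)) (by
    rw [LinearEquiv.map_ne_zero_iff]
    intro h0
    apply P.rep_nonzero
    funext i
    have h2 : P.rep i = 0 := ψ.injective (by rw [map_zero]; exact congrFun h0 i)
    simpa using h2)

/-- The span of two points. -/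
def jn (P Q : Pt K) : Submodule K (Fin 3 → K) := P.submodule ⊔ Q.submodule

theorem on_jn_left (P Q : Pt K) : OnLine P (jn P Q) := le_sup_left
theorem on_jn_right (P Q : Pt K) : OnLine Q (jn P Q) := le_sup_right

theorem isLine_jn {P Q : Pt K} (hPQ : P ≠ Q) : IsLine (jn P Q) := by
  have h1 := Submodule.finrank_sup_add_finrank_inf_eq P.submodule Q.submodule
  rw [P.finrank_submodule, Q.finrank_submodule] at h1
  have h2 : Module.finrank K (P.submodule ⊓ Q.submodule : Submodule K (Fin 3 → K)) ≤ 1 := by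
    have := Submodule.finrank_mono (inf_le_left : P.submodule ⊓ Q.submodule ≤ P.submodule)
    rwa [P.finrank_submodule] at this
  have h3 : Module.finrank K (P.submodule ⊓ Q.submodule : Submodule K (Fin 3 → K)) ≠ 1 := by
    intro h3
    have a := Submodule.eq_of_le_of_finrank_eq
      (inf_le_left : P.submodule ⊓ Q.submodule ≤ P.submodule) (by rw [h3, P.finrank_submodule])
    have b := Submodule.eq_of_le_of_finrank_eq
      (inf_le_right : P.submodule ⊓ Q.submodule ≤ Q.submodule) (by rw [h3, Q.finrank_submodule])
    exact hPQ (Projectivization.submodule_injective (a.symm.trans b))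
  unfold IsLine jn
  omega

theorem line_eq_jn {P Q : Pt K} (hPQ : P ≠ Q) {L : Submodule K (Fin 3 → K)} (hL : IsLine L)
    (hP : OnLine P L) (hQ : OnLine Q L) : L = jn P Q := by
  symm
  exact Submodule.eq_of_le_of_finrank_eq (sup_le hP hQ)
    ((isLine_jn hPQ : Module.finrank K _ = 2).trans hL.symm)

theorem line_eq {P Q : Pt K} (hPQ : P ≠ Q) {L M : Submodule K (Fin 3 → K)} (hL : IsLine L)
    (hM : IsLine M) (hP : OnLine P L) (hQ : OnLine Q L) (hP' : OnLine P M) (hQ' : OnLine Q M) :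
    L = M :=
  (line_eq_jn hPQ hL hP hQ).trans (line_eq_jn hPQ hM hP' hQ').symm

theorem onLine_iff (P : Pt K) (L : Submodule K (Fin 3 → K)) : OnLine P L ↔ P.rep ∈ L := by
  unfold OnLine
  rw [P.submodule_eq, Submodule.span_singleton_le_iff_mem]

theorem onLine_mk (v : Fin 3 → K) (hv : v ≠ 0) (L : Submodule K (Fin 3 → K)) :
    OnLine (Projectivization.mk K v hv) L ↔ v ∈ L := by
  unfold OnLine
  rw [Projectivization.submodule_mk, Submodule.span_singleton_le_iff_mem]

theorem lines_meet {L M : Submodule K (Fin 3 → K)} (hL : IsLine L) (hM : IsLine M) :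
    ∃ P : Pt K, OnLine P L ∧ OnLine P M := by
  have h1 := Submodule.finrank_sup_add_finrank_inf_eq L M
  have h2 := Submodule.finrank_le (L ⊔ M)
  unfold IsLine at hL hM
  rw [Module.finrank_fin_fun] at h2
  have h3 : (L ⊓ M : Submodule K (Fin 3 → K)) ≠ ⊥ := by
    intro h
    rw [h, finrank_bot] at h1
    omega
  obtain ⟨v, hv, hv0⟩ := Submodule.exists_mem_ne_zero_of_ne_bot h3
  exact ⟨Projectivization.mk K v hv0, (onLine_mk _ _ _).2 hv.1, (onLine_mk _ _ _).2 hv.2⟩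

theorem exists_ne_on {L : Submodule K (Fin 3 → K)} (hL : IsLine L) (N : Pt K) :
    ∃ P : Pt K, OnLine P L ∧ P ≠ N := by
  by_contra! hc
  have : L ≤ N.submodule := by
    intro v hv
    by_cases hv0 : v = 0
    · rw [hv0]; exact zero_mem _
    · have := hc _ ((onLine_mk v hv0 L).2 hv)
      rw [← this, Projectivization.submodule_mk]
      exact Submodule.mem_span_singleton_self v
  have := Submodule.finrank_mono this
  rw [N.finrank_submodule] at this
  unfold IsLine at hL
  omega

theorem onLine_projMap (f : (Fin 3 → K) ≃ₗ[K] (Fin 3 → K)) {P : Pt K}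
    {L : Submodule K (Fin 3 → K)} (h : OnLine P L) :
    OnLine (projMap f P) (L.map f.toLinearMap) := by
  induction P using Projectivization.ind with
  | h v hv =>
    unfold projMap
    rw [Projectivization.map_mk, onLine_mk]
    rw [onLine_mk] at h
    exact Submodule.mem_map_of_mem h

theorem isLine_map (f : (Fin 3 → K) ≃ₗ[K] (Fin 3 → K)) {L : Submodule K (Fin 3 → K)}
    (h : IsLine L) : IsLine (L.map f.toLinearMap) := by
  unfold IsLine at *
  rw [← h]
  exact LinearEquiv.finrank_map_eq f L

theorem projMap_inj (f : (Fin 3 → K) ≃ₗ[K] (Fin 3 → K)) : Function.Injective (projMap f) :=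
  Projectivization.map_injective _ f.injective

theorem projMap_refl (P : Pt K) : projMap (LinearEquiv.refl K (Fin 3 → K)) P = P := by
  induction P using Projectivization.ind with
  | h v hv => rfl

theorem arith_even (h t c : ℕ) (ht2 : 2 ≤ t) (htq : t < 2 ^ h) (hc : c * t = 2 ^ h + t) :
    ¬ Even c := by
  have hd : t ∣ 2 ^ h := (Nat.dvd_add_left (dvd_refl t)).1 (hc ▸ Dvd.intro_left c rfl)
  obtain ⟨k, hk, rfl⟩ := (Nat.dvd_prime_pow Nat.prime_two).1 hd
  have hkh : k < h := (Nat.pow_lt_pow_iff_right (by norm_num)).1 htq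
  obtain ⟨d, rfl⟩ := Nat.exists_eq_add_of_lt hkh
  have : c = 2 ^ (d + 1) + 1 := by
    apply Nat.eq_of_mul_eq_mul_right (show 0 < 2 ^ k by positivity)
    rw [hc]; ring
  rw [this, Nat.even_add_one]
  simp [Nat.even_pow]

theorem exists_ne_of_two_le [Finite K] {A : Set (Pt K)} {L : Submodule K (Fin 3 → K)}
    (h : 2 ≤ secantCount A L) (P : Pt K) : ∃ Q ∈ A, OnLine Q L ∧ Q ≠ P := by
  obtain ⟨Q, hQ, hne⟩ := Set.exists_ne_of_one_lt_ncard (s := {P ∈ A | OnLine P L}) h P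
  exact ⟨Q, hQ.1, hQ.2, hne⟩

theorem count_ne_zero [Finite K] {A : Set (Pt K)} {L : Submodule K (Fin 3 → K)} {P : Pt K}
    (hP : P ∈ A) (hL : OnLine P L) : secantCount A L ≠ 0 :=
  Set.ncard_ne_zero_of_mem (s := {P ∈ A | OnLine P L}) ⟨hP, hL⟩

theorem eq_of_count_two [Finite K] {A : Set (Pt K)} {L : Submodule K (Fin 3 → K)}
    (h : secantCount A L = 2) {P Q R : Pt K} (hP : P ∈ A) (hQ : Q ∈ A) (hR : R ∈ A)
    (hPL : OnLine P L) (hQL : OnLine Q L) (hRL : OnLine R L) (hQP : Q ≠ P) (hRP : R ≠ P) :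
    Q = R := by
  obtain ⟨a, b, hab, he⟩ := Set.ncard_eq_two.1 h
  have h1 : P ∈ ({a, b} : Set (Pt K)) := he ▸ ⟨hP, hPL⟩
  have h2 : Q ∈ ({a, b} : Set (Pt K)) := he ▸ ⟨hQ, hQL⟩
  have h3 : R ∈ ({a, b} : Set (Pt K)) := he ▸ ⟨hR, hRL⟩
  simp only [Set.mem_insert_iff, Set.mem_singleton_iff] at h1 h2 h3
  grind

/-- The common core of both cases. -/
theorem core [Finite K] (h t : ℕ) (ht2 : 2 ≤ t) (htq : t < 2 ^ h)
    (A : Set (Pt K)) (m : Submodule K (Fin 3 → K)) (N : Pt K) (hm : IsLine m) (hN : OnLine N m)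
    (hA : A.ncard = 2 ^ h + t) (hdis : ∀ P ∈ A, ¬ OnLine P m)
    (hthru : ∀ L, IsLine L → OnLine N L → secantCount A L = 0 ∨ secantCount A L = t)
    (hoff : ∀ L, IsLine L → ¬ OnLine N L → secantCount A L = 0 ∨ secantCount A L = 2)
    (htrans : ∀ L, IsLine L → OnLine N L → ∀ P ∈ A, OnLine P L → ∀ Q ∈ A, OnLine Q L →
      ∃ f : (Fin 3 → K) ≃ₗ[K] (Fin 3 → K), (∀ X : Pt K, OnLine X m → projMap f X = X) ∧
        (∀ M, IsLine M → OnLine N M → ∀ X, OnLine X M → OnLine (projMap f X) M) ∧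
        Stabilises f A ∧ projMap f P = Q) : False := by
  obtain ⟨S, hSm, hSN⟩ := exists_ne_on hm N
  have hneN : ∀ P ∈ A, N ≠ P := fun P hP e => hdis P hP (e ▸ hN)
  have hneS : ∀ P ∈ A, S ≠ P := fun P hP e => hdis P hP (e ▸ hSm)
  have hNoff : ∀ P ∈ A, ¬ OnLine N (jn S P) := by
    intro P hP hc
    have := line_eq hSN (isLine_jn (hneS P hP)) hm (on_jn_left _ _) hc hSm hN
    exact hdis P hP (this ▸ on_jn_right S P)
  have htwo : ∀ P ∈ A, secantCount A (jn S P) = 2 := fun P hP =>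
    (hoff _ (isLine_jn (hneS P hP)) (hNoff P hP)).resolve_left
      (count_ne_zero hP (on_jn_right _ _))
  have hex : ∀ P : Pt K, ∃ Q : Pt K, P ∈ A → Q ∈ A ∧ OnLine Q (jn S P) ∧ Q ≠ P := by
    intro P
    by_cases hP : P ∈ A
    · obtain ⟨Q, h1, h2, h3⟩ := exists_ne_of_two_le (htwo P hP).ge P
      exact ⟨Q, fun _ => ⟨h1, h2, h3⟩⟩
    · exact ⟨P, fun h => absurd h hP⟩
  choose σ hσ using hex
  have hjn : ∀ P ∈ A, jn S (σ P) = jn S P := by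
    intro P hP
    obtain ⟨h1, h2, h3⟩ := hσ P hP
    exact (line_eq_jn (hneS _ h1) (isLine_jn (hneS P hP)) (on_jn_left _ _) h2).symm
  have hσσ : ∀ P ∈ A, σ (σ P) = P := by
    intro P hP
    obtain ⟨h1, h2, h3⟩ := hσ P hP
    obtain ⟨h4, h5, h6⟩ := hσ _ h1
    rw [hjn P hP] at h5
    exact eq_of_count_two (htwo P hP) h1 h4 hP h2 h5 (on_jn_right _ _) h6 h3.symm
  have hne : ∀ P ∈ A, jn N (σ P) ≠ jn N P := by
    intro P hP hc
    obtain ⟨h1, h2, h3⟩ := hσ P hP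
    have := line_eq h3 (isLine_jn (hneN P hP)) (isLine_jn (hneS P hP))
      (hc ▸ on_jn_right _ _) (on_jn_right _ _) h2 (on_jn_right _ _)
    exact hNoff P hP (this ▸ on_jn_left _ _)
  have hcomp : ∀ P ∈ A, ∀ Q ∈ A, jn N P = jn N Q → jn N (σ P) = jn N (σ Q) := by
    intro P hP Q hQ he
    obtain ⟨h1, h2, h3⟩ := hσ P hP
    obtain ⟨h4, h5, h6⟩ := hσ Q hQ
    obtain ⟨f, hf1, hf2, hf3, hf4⟩ := htrans _ (isLine_jn (hneN P hP)) (on_jn_left _ _) P hP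
      (on_jn_right _ _) Q hQ (he ▸ on_jn_right _ _)
    have hfA : projMap f (σ P) ∈ A := hf3 ▸ Set.mem_image_of_mem _ h1
    have hl : (jn S P).map f.toLinearMap = jn S Q := by
      apply line_eq_jn (hneS Q hQ) (isLine_map f (isLine_jn (hneS P hP)))
      · have := onLine_projMap f (on_jn_left S P)
        rwa [hf1 S hSm] at this
      · have := onLine_projMap f (on_jn_right S P)
        rwa [hf4] at this
    have h7 : OnLine (projMap f (σ P)) (jn S Q) := hl ▸ onLine_projMap f h2
    have h8 : projMap f (σ P) ≠ Q := by
      rw [← hf4]; exact fun e => h3 (projMap_inj f e)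
    have h9 : projMap f (σ P) = σ Q :=
      eq_of_count_two (htwo Q hQ) hQ hfA h4 (on_jn_right _ _) h7 h5 h8 h6
    have h10 := hf2 _ (isLine_jn (hneN _ h1)) (on_jn_left _ _) _ (on_jn_right _ _)
    rw [h9] at h10
    exact line_eq_jn (hneN _ h4) (isLine_jn (hneN _ h1)) (on_jn_left _ _) h10
  have hfin : A.Finite := Set.toFinite A
  set F := hfin.toFinset with hF
  have hFA : ∀ P, P ∈ F ↔ P ∈ A := fun P => hfin.mem_toFinset
  set I := F.image (jn N) with hI
  have hcard : I.card * t = 2 ^ h + t := by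
    rw [← hA, Set.ncard_eq_toFinset_card A hfin, ← hF, Finset.card_eq_sum_card_image (jn N) F,
      ← hI, Finset.sum_const_nat (m := t)]
    intro L hL
    obtain ⟨P, hP, rfl⟩ := Finset.mem_image.1 hL
    rw [hFA] at hP
    have h1 := (hthru _ (isLine_jn (hneN P hP)) (on_jn_left _ _)).resolve_left
      (count_ne_zero hP (on_jn_right _ _))
    rw [← h1, secantCount, ← Set.ncard_coe_finset]
    congr 1
    ext Q
    simp only [Finset.coe_filter, Set.mem_setOf_eq, hFA]
    constructor
    · rintro ⟨h2, h3⟩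
      exact ⟨h2, h3 ▸ on_jn_right _ _⟩
    · rintro ⟨h2, h3⟩
      exact ⟨h2, (line_eq_jn (hneN Q h2) (isLine_jn (hneN P hP)) (on_jn_left _ _) h3).symm⟩
  apply arith_even h t _ ht2 htq hcard
  have hpre : ∀ L : Submodule K (Fin 3 → K), ∃ P : Pt K, L ∈ I → P ∈ A ∧ jn N P = L := by
    intro L
    by_cases hL : L ∈ I
    · obtain ⟨P, hP, he⟩ := Finset.mem_image.1 hL
      exact ⟨P, fun _ => ⟨(hFA P).1 hP, he⟩⟩
    · exact ⟨N, fun h => absurd h hL⟩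
  choose p hp using hpre
  have hmem : ∀ P ∈ A, jn N P ∈ I := fun P hP => Finset.mem_image_of_mem _ ((hFA P).2 hP)
  have hsum : ∑ L ∈ I, (1 : ZMod 2) = 0 := by
    refine Finset.sum_involution (fun L _ => jn N (σ (p L))) ?_ ?_ ?_ ?_
    · intros; decide
    · intro L hL _ hc
      obtain ⟨h1, h2⟩ := hp L hL
      exact hne _ h1 (hc.trans h2.symm)
    · intro L hL
      obtain ⟨h1, h2⟩ := hp L hL
      exact hmem _ (hσ _ h1).1
    · intro L hL
      obtain ⟨h1, h2⟩ := hp L hL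
      have h3 := (hσ _ h1).1
      obtain ⟨h4, h5⟩ := hp _ (hmem _ h3)
      have := hcomp _ h4 _ h3 h5
      rw [hσσ _ h1, h2] at this
      exact this
  rw [Finset.sum_const, nsmul_one] at hsum
  rwa [ZMod.natCast_eq_zero_iff_even] at hsum

/-- For `t > 2`, each point of a KM-arc lies on a `t`-secant. -/
theorem exists_t_secant [Fintype K] (h t : ℕ) (hcard : Fintype.card K = 2 ^ h) (ht : 2 < t)
    (A : Set (Pt K)) (hA : IsKMArc (2 ^ h) t A) (P : Pt K) (hP : P ∈ A) :
    ∃ L, IsLine L ∧ OnLine P L ∧ secantCount A L = t := by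
  by_contra! hc
  have htwo : ∀ L, IsLine L → OnLine P L → secantCount A L = 2 := by
    intro L hL hPL
    rcases hA.2 L hL with h1 | h1 | h1
    · exact absurd h1 (count_ne_zero hP hPL)
    · exact h1
    · exact absurd h1 (hc L hL hPL)
  let B : Set (Pt K) := A \ {P}
  have hBcard : B.ncard = 2 ^ h + t - 1 := by
    rw [Set.ncard_diff_singleton_of_mem hP, hA.1]
  have hnz : ∀ Q : B, P.submodule.mkQ Q.1.rep ≠ 0 := by
    intro Q hz
    rw [Submodule.mkQ_apply, Submodule.Quotient.mk_eq_zero] at hz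
    have : Q.1.submodule = P.submodule :=
      Submodule.eq_of_le_of_finrank_eq ((onLine_iff Q.1 P.submodule).2 hz)
        (by rw [Q.1.finrank_submodule, P.finrank_submodule])
    exact Q.2.2 (Projectivization.submodule_injective this)
  let g : B → Projectivization K ((Fin 3 → K) ⧸ P.submodule) := fun Q =>
    Projectivization.mk K _ (hnz Q)
  have hg : Function.Injective g := by
    intro Q R he
    obtain ⟨a, ha⟩ := (Projectivization.mk_eq_mk_iff' K _ _ (hnz Q) (hnz R)).1 he
    rw [← map_smul, ← sub_eq_zero, ← map_sub, Submodule.mkQ_apply,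
      Submodule.Quotient.mk_eq_zero] at ha
    have hRP : P ≠ R.1 := fun e => R.2.2 e.symm
    have hQ : OnLine Q.1 (jn P R.1) := by
      rw [onLine_iff]
      have h1 : R.1.rep ∈ jn P R.1 := (onLine_iff _ _).1 (on_jn_right P R.1)
      have h2 := on_jn_left P R.1 ha
      have h3 := sub_mem (Submodule.smul_mem _ a h1) h2
      rwa [sub_sub_cancel] at h3
    exact Subtype.ext (eq_of_count_two (htwo _ (isLine_jn hRP) (on_jn_left _ _)) hP Q.2.1 R.2.1
      (on_jn_left _ _) hQ (on_jn_right _ _) Q.2.2 R.2.2)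
  have hfr : Module.finrank K ((Fin 3 → K) ⧸ P.submodule) = 2 := by
    have := Submodule.finrank_quotient_add_finrank P.submodule
    rw [P.finrank_submodule, Module.finrank_fin_fun] at this
    omega
  have hn := Projectivization.card_of_finrank_two K ((Fin 3 → K) ⧸ P.submodule) hfr
  have : Finite ((Fin 3 → K) ⧸ P.submodule) := inferInstance
  have hle := Nat.card_le_card_of_injective g hg
  rw [hn, Nat.card_coe_set_eq, hBcard, Nat.card_eq_fintype_card, hcard] at hle
  omega

/-- An elation with a fixed point off its axis fixes everything off the line through that
point and the centre. -/
theorem elation_fixed {f : (Fin 3 → K) ≃ₗ[K] (Fin 3 → K)} {m : Submodule K (Fin 3 → K)}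
    {R : Pt K} (hf : IsElation f m R) {P X : Pt K} (hP : ¬ OnLine P m) (hfP : projMap f P = P)
    (hX : ¬ OnLine X (jn R P)) : projMap f X = X := by
  obtain ⟨hm, hR, hax, hcen⟩ := hf
  by_contra hne
  have hPX : P ≠ X := fun e => hX (e ▸ on_jn_right _ _)
  have hRX : R ≠ X := fun e => hX (e ▸ on_jn_left _ _)
  have hRP : R ≠ P := fun e => hP (e ▸ hR)
  have hl := isLine_jn hPX
  obtain ⟨Y, hY1, hY2⟩ := lines_meet hl hm
  have hPY : P ≠ Y := fun e => hP (e ▸ hY2)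
  have hmap : (jn P X).map f.toLinearMap = jn P X := by
    apply line_eq hPY (isLine_map f hl) hl _ _ (on_jn_left _ _) hY1
    · have := onLine_projMap f (on_jn_left P X)
      rwa [hfP] at this
    · have := onLine_projMap f hY1
      rwa [hax Y hY2] at this
  have h1 : OnLine (projMap f X) (jn P X) := by
    have := onLine_projMap f (on_jn_right P X)
    rwa [hmap] at this
  have h2 := hcen _ (isLine_jn hRX) (on_jn_left _ _) X (on_jn_right _ _)
  have h3 := line_eq hne hl (isLine_jn hRX) h1 (on_jn_right _ _) h2 (on_jn_right _ _)
  have h4 := line_eq_jn hRP hl (h3 ▸ on_jn_left _ _) (on_jn_left _ _)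
  exact hX (h4 ▸ on_jn_right _ _)

/-- the elation line of an elation KM-arc of type `t` (for `t = 2`:
a hyperoval stabilised by a non-trivial elation with this axis) is a `t`-secant. -/
theorem elation_line_is_t_secant
    {K : Type*} [Field K] [Fintype K] (h t : ℕ)
    (hcard : Fintype.card K = 2 ^ h)
    (ht2 : 2 ≤ t) (htq : t < 2 ^ h)
    (A : Set (Pt K)) (m : Submodule K (Fin 3 → K))
    (hA : IsKMArc (2 ^ h) t A)
    (hel : (2 < t ∧ ∃ N : Pt K, IsElationKMArc (2 ^ h) t A N m)
      ∨ (t = 2 ∧ IsLine m ∧ ∃ f : (Fin 3 → K) ≃ₗ[K] (Fin 3 → K),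
          IsElationAxis f m ∧ Stabilises f A ∧ projMap f ≠ id)) :
    secantCount A m = t := by
  by_contra hmt
  have hid : ∀ P : Pt K, (∀ N : Pt K, ∃ f : (Fin 3 → K) ≃ₗ[K] (Fin 3 → K),
      (∀ X : Pt K, OnLine X m → projMap f X = X) ∧
        (∀ M, IsLine M → OnLine N M → ∀ X, OnLine X M → OnLine (projMap f X) M) ∧
        Stabilises f A ∧ projMap f P = P) := by
    intro P N
    refine ⟨LinearEquiv.refl K _, fun X _ => projMap_refl X, ?_, ?_, projMap_refl P⟩
    · intro M _ _ X hX
      rwa [projMap_refl]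
    · unfold Stabilises
      rw [show projMap (LinearEquiv.refl K (Fin 3 → K)) = id from funext projMap_refl,
        Set.image_id]
  rcases hel with ⟨ht, N, -, hm, hN, hnuc, htr⟩ | ⟨rfl, hm, f, ⟨R, hf⟩, hst, hfid⟩
  · have hsec : ∀ L, IsLine L → OnLine N L → ∀ P ∈ A, OnLine P L → P ≠ N →
        secantCount A L = t := by
      intro L hL hNL P hP hPL hPN
      obtain ⟨M, hM, hPM, hMt⟩ := exists_t_secant h t hcard ht A hA P hP
      rw [line_eq hPN hL hM hPL hNL hPM (hnuc M hM hMt)]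
      exact hMt
    have hdis : ∀ P ∈ A, ¬ OnLine P m := by
      intro P hP hPm
      have h2 : 2 ≤ secantCount A m := by
        have := count_ne_zero hP hPm
        rcases hA.2 m hm with h1 | h1 | h1 <;> omega
      obtain ⟨Q, hQ, hQm, hQN⟩ := exists_ne_of_two_le h2 N
      exact hmt (hsec m hm hN Q hQ hQm hQN)
    have hneN : ∀ P ∈ A, P ≠ N := fun P hP e => hdis P hP (e ▸ hN)
    refine core h t ht2 htq A m N hm hN hA.1 hdis ?_ ?_ ?_
    · intro L hL hNL
      by_cases h0 : secantCount A L = 0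
      · exact Or.inl h0
      · right
        have h2 : 2 ≤ secantCount A L := by
          rcases hA.2 L hL with h1 | h1 | h1 <;> omega
        obtain ⟨Q, hQ, hQL, hQN⟩ := exists_ne_of_two_le h2 N
        exact hsec L hL hNL Q hQ hQL hQN
    · intro L hL hNL
      rcases hA.2 L hL with h1 | h1 | h1
      · exact Or.inl h1
      · exact Or.inr h1
      · exact absurd (hnuc L hL h1) hNL
    · intro L hL hNL P hP hPL Q hQ hQL
      by_cases hPQ : P = Q
      · subst hPQ
        exact hid P N
      have hLt := hsec L hL hNL P hP hPL (hneN P hP)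
      have hLm : L ≠ m := fun e => hdis P hP (e ▸ hPL)
      obtain ⟨f, ⟨R, hf⟩, hst, hfP⟩ := htr L hL hLt hLm P hP hPL Q hQ hQL
      obtain ⟨-, hR, hax, hcen⟩ := hf
      have hRP : R ≠ P := fun e => hdis P hP (e ▸ hR)
      have h1 := hcen _ (isLine_jn hRP) (on_jn_left _ _) P (on_jn_right _ _)
      rw [hfP] at h1
      have h2 := line_eq hPQ hL (isLine_jn hRP) hPL hQL (on_jn_right _ _) h1
      have hRN : R = N := by
        by_contra hne
        exact hLm (line_eq hne hL hm (h2 ▸ on_jn_left _ _) hNL hR hN)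
      subst hRN
      exact ⟨f, hax, hcen, hst, hfP⟩
  · have h02 : ∀ L, IsLine L → secantCount A L = 0 ∨ secantCount A L = 2 := by
      intro L hL
      rcases hA.2 L hL with h1 | h1 | h1 <;> omega
    have hdis : ∀ P ∈ A, ¬ OnLine P m := fun P hP hPm =>
      count_ne_zero hP hPm ((h02 m hm).resolve_right hmt)
    have hf' := hf
    obtain ⟨-, hR, hax, hcen⟩ := hf'
    have hneR : ∀ P ∈ A, R ≠ P := fun P hP e => hdis P hP (e ▸ hR)
    have hnofix : ∀ P ∈ A, projMap f P ≠ P := by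
      intro P hP hfP
      obtain ⟨P', hP', hP'l⟩ : ∃ P' ∈ A, ¬ OnLine P' (jn R P) := by
        by_contra! hall
        have h1 : secantCount A (jn R P) = A.ncard := by
          unfold secantCount
          congr 1
          ext X
          exact ⟨fun hx => hx.1, fun hx => ⟨hx, hall X hx⟩⟩
        rw [hA.1] at h1
        rcases h02 _ (isLine_jn (hneR P hP)) with h3 | h3 <;> omega
      have hfP' := elation_fixed hf (hdis P hP) hfP hP'l
      apply hfid
      funext X
      by_contra hX
      have hXR : R ≠ X := fun e => hX (hax X (e ▸ hR))
      have h1 : OnLine X (jn R P) := by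
        by_contra hc
        exact hX (elation_fixed hf (hdis P hP) hfP hc)
      have h2 : OnLine X (jn R P') := by
        by_contra hc
        exact hX (elation_fixed hf (hdis P' hP') hfP' hc)
      have := line_eq hXR (isLine_jn (hneR P hP)) (isLine_jn (hneR P' hP')) (on_jn_left _ _) h1
        (on_jn_left _ _) h2
      exact hP'l (this ▸ on_jn_right _ _)
    refine core h 2 ht2 htq A m R hm hR hA.1 hdis (fun L hL _ => h02 L hL)
      (fun L hL _ => h02 L hL) ?_
    intro L hL hRL P hP hPL Q hQ hQL
    by_cases hPQ : P = Q
    · subst hPQ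
      exact hid P R
    refine ⟨f, hax, hcen, hst, ?_⟩
    have hfA : projMap f P ∈ A := hst ▸ Set.mem_image_of_mem _ hP
    exact eq_of_count_two ((h02 L hL).resolve_left (count_ne_zero hP hPL)) hP hfA hQ hPL
      (hcen L hL hRL P hPL) hQL (hnofix P hP) (Ne.symm hPQ)
end
end

section
/- Let q be a power of 2, let h > 1, and regard F_q as a subfield of F = F_{q^h}. Let I be a subgroup of the additive group (F,+) with F_q ∩ I = {0} and F_q + I = F (a direct complement of F_q in (F,+)), let t be a power of 2 with 2 < t ≤ q, and let S' be a subgroup of (F,+) of order t·q^(h-1). For each α ∈ F_q let U_α ⊆ F_q be a set that is either empty or of size t, and assume that at least one U_α is nonempty. If, for every α ∈ F_q with U_α ≠ ∅, the set U_α + I = {u + i : u ∈ U_α, i ∈ I} is a coset of S' in (F,+), then I ⊆ S', the set S = S' ∩ F_q is a subgroup of (F_q,+) of order t with S' = S + I, and every nonempty U_α is a coset of S in (F_q,+). -/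
open scoped Classical

noncomputable section

variable {K : Type*} [Field K]

/-- algebraic content of Theorem 2.6 of the paper. Inside `F = F_{q^h}`
the subfield `F_q` is `{x | x^q = x}`. If each nonempty `U_α + I` is a coset of `S'`,
then `I ⊆ S'`, `S = S' ∩ F_q` is an additive subgroup of order `t` with `S' = S + I`,
and every nonempty `U_α` is a coset of `S` inside `F_q`. -/
theorem gw_converse
    {F : Type*} [Field F] [Fintype F] (q e h t : ℕ)
    (hq : q = 2 ^ e) (he : 1 ≤ e) (hh : 1 < h)
    (hcard : Fintype.card F = q ^ h)
    (I : AddSubgroup F)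
    (hIint : ∀ x : F, x ^ q = x → x ∈ I → x = 0)
    (hIsum : ∀ x : F, ∃ a : F, a ^ q = a ∧ ∃ i ∈ I, x = a + i)
    (ht : ∃ j : ℕ, t = 2 ^ j) (ht2 : 2 < t) (htq : t ≤ q)
    (S' : AddSubgroup F) (hS' : Nat.card S' = t * q ^ (h - 1))
    (U : F → Set F)
    (hUsub : ∀ α : F, α ^ q = α → ∀ u ∈ U α, u ^ q = u)
    (hUcard : ∀ α : F, α ^ q = α → U α = ∅ ∨ (U α).ncard = t)
    (hne : ∃ α : F, α ^ q = α ∧ U α ≠ ∅)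
    (hcoset : ∀ α : F, α ^ q = α → U α ≠ ∅ →
      ∃ β : F, {x : F | ∃ u ∈ U α, ∃ i ∈ I, x = u + i} = (fun s => β + s) '' (S' : Set F)) :
    (I : Set F) ⊆ (S' : Set F) ∧
    ∃ S : AddSubgroup F, (S : Set F) = {x : F | x ∈ S' ∧ x ^ q = x} ∧
      Nat.card S = t ∧
      (S' : Set F) = {x : F | ∃ s ∈ S, ∃ i ∈ I, x = s + i} ∧
      ∀ α : F, α ^ q = α → U α ≠ ∅ →
        ∃ β : F, β ^ q = β ∧ U α = (fun s => β + s) '' (S : Set F) := by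
  have hp2 : Fact (Nat.Prime 2) := ⟨Nat.prime_two⟩
  have hchar : CharP F 2 := by
    obtain ⟨p, hp⟩ := CharP.exists F
    obtain ⟨n, hpp, hn⟩ := FiniteField.card F p
    have hd : p ∣ 2 ^ (e * h) := by
      rw [pow_mul, ← hq, ← hcard, hn]
      exact dvd_pow_self p n.ne_zero
    have h2 : p = 2 := (Nat.prime_dvd_prime_iff_eq hpp Nat.prime_two).1 (hpp.dvd_of_dvd_pow hd)
    rwa [h2] at hp
  have hsub : ∀ x y : F, x ^ q = x → y ^ q = y → (x - y) ^ q = x - y := by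
    intro x y hx hy
    rw [hq] at hx hy ⊢
    rw [sub_pow_char_pow, hx, hy]
  have hq0 : q ≠ 0 := by omega
  have h0 : (0 : F) ^ q = 0 := zero_pow hq0
  have hneg : ∀ x : F, x ^ q = x → (-x) ^ q = -x := by
    intro x hx
    simpa using hsub 0 x h0 hx
  have hadd : ∀ x y : F, x ^ q = x → y ^ q = y → (x + y) ^ q = x + y := by
    intro x y hx hy
    simpa using hsub x (-y) hx (hneg y hy)
  have hIS : ∀ i ∈ I, i ∈ S' := by
    intro i hi
    obtain ⟨α, hα, hU⟩ := hne
    obtain ⟨β, hβ⟩ := hcoset α hα hU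
    obtain ⟨u, hu⟩ := Set.nonempty_iff_ne_empty.2 hU
    have h1 : u ∈ (fun s => β + s) '' (S' : Set F) := by
      rw [← hβ]; exact ⟨u, hu, 0, I.zero_mem, by simp⟩
    have h2 : u + i ∈ (fun s => β + s) '' (S' : Set F) := by
      rw [← hβ]; exact ⟨u, hu, i, hi, rfl⟩
    obtain ⟨s, hs, rfl⟩ := h1
    obtain ⟨s2, hs2, h3⟩ := h2
    have h4 : i = s2 - s := by
      simp only at h3
      linear_combination -h3
    rw [h4]
    exact S'.sub_mem hs2 hs
  let S : AddSubgroup F :=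
    { carrier := {x : F | x ∈ S' ∧ x ^ q = x}
      add_mem' := fun {a b} ha hb => ⟨S'.add_mem ha.1 hb.1, hadd a b ha.2 hb.2⟩
      zero_mem' := ⟨S'.zero_mem, h0⟩
      neg_mem' := fun {a} ha => ⟨S'.neg_mem ha.1, hneg a ha.2⟩ }
  have key : ∀ α : F, α ^ q = α → U α ≠ ∅ →
        ∃ β : F, β ^ q = β ∧ U α = (fun s => β + s) '' (S : Set F) := by
    intro α hα hU
    obtain ⟨β, hβ⟩ := hcoset α hα hU
    obtain ⟨u, hu⟩ := Set.nonempty_iff_ne_empty.2 hU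
    have hmem : ∀ v ∈ U α, ∃ s ∈ S', β + s = v := by
      intro v hv
      have h1 : v ∈ (fun s => β + s) '' (S' : Set F) := by
        rw [← hβ]; exact ⟨v, hv, 0, I.zero_mem, by simp⟩
      exact h1
    obtain ⟨s0, hs0, h5⟩ := hmem u hu
    have huq := hUsub α hα u hu
    refine ⟨u, huq, ?_⟩
    ext v
    constructor
    · intro hv
      obtain ⟨s1, hs1, h6⟩ := hmem v hv
      refine ⟨v - u, ⟨?_, hsub v u (hUsub α hα v hv) huq⟩, by simp⟩
      have h7 : v - u = s1 - s0 := by rw [← h5, ← h6]; ring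
      rw [h7]
      exact S'.sub_mem hs1 hs0
    · rintro ⟨s, ⟨hs, hsq⟩, rfl⟩
      have h8 : u + s ∈ {x : F | ∃ u ∈ U α, ∃ i ∈ I, x = u + i} := by
        rw [hβ]
        exact ⟨s0 + s, S'.add_mem hs0 hs, by simp only; rw [← h5]; ring⟩
      obtain ⟨v, hv, i, hi, h9⟩ := h8
      have h10 : i = (u + s) - v := by rw [h9]; ring
      have h11 : i = 0 := by
        refine hIint i ?_ hi
        rw [h10]
        exact hsub _ _ (hadd _ _ huq hsq) (hUsub α hα v hv)
      simp only
      rw [h9, h11, add_zero]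
      exact hv
  refine ⟨hIS, S, rfl, ?_, ?_, key⟩
  · obtain ⟨α, hα, hU⟩ := hne
    obtain ⟨β, -, hβ⟩ := key α hα hU
    have h12 := (hUcard α hα).resolve_left hU
    rw [hβ, Set.ncard_image_of_injective _ (add_right_injective β)] at h12
    rw [← h12]
    exact Nat.card_coe_set_eq (S : Set F)
  · ext x
    constructor
    · intro hx
      obtain ⟨a, ha, i, hi, rfl⟩ := hIsum x
      refine ⟨a, ⟨?_, ha⟩, i, hi, rfl⟩
      have h13 := S'.sub_mem hx (hIS i hi)
      rwa [add_sub_cancel_right] at h13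
    · rintro ⟨s, hs, i, hi, rfl⟩
      exact S'.add_mem hs.1 (hIS i hi)
end
end

section
/- Let q = 2^h and let β, γ ∈ F_q with γ ∉ {0,1}, β ∉ {0,1} and β + 1 ≠ γ, so that C = {(1:0), (0:1), (1:1), (γ:1), (β+1:1)} is a set of five distinct points of PG(1,q). Then C is an F_2-linear set if and only if β ∈ {γ, 1/(γ+1), √(γ+1), 1 + 1/γ, 1 + γ²}, where √(γ+1) denotes the unique square root of γ+1 in F_q. Moreover, if two of the five values γ, 1/(γ+1), √(γ+1), 1 + 1/γ, 1 + γ² coincide, then they all coincide and equal γ, with γ³ = 1; in that case, if β = γ, then C = {(1:x) : x ∈ F_4} ∪ {(0:1)} is an F_4-subline (here F_4 = {x ∈ F_q : x^4 = x}). -/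
open scoped Classical

noncomputable section

variable {K : Type*} [Field K]

namespace ClubAux

/-- determinant form (characteristic two) -/
def dt {F : Type*} [Field F] (u v : Fin 2 → F) : F := u 0 * v 1 + u 1 * v 0

lemma dt_add {F : Type*} [Field F] (u v w : Fin 2 → F) : dt u (v + w) = dt u v + dt u w := by
  simp [dt]; ring

lemma dt_smul {F : Type*} [Field F] (c : F) (u v : Fin 2 → F) : dt u (c • v) = c * dt u v := by
  simp [dt]; ring

lemma dt_self {F : Type*} [Field F] [CharP F 2] (u : Fin 2 → F) : dt u u = 0 := by
  have := CharTwo.add_self_eq_zero (u 0 * u 1)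
  simp only [dt]; linear_combination this

lemma vadd_self {F : Type*} [Field F] [CharP F 2] (u : Fin 2 → F) : u + u = 0 := by
  funext i; exact CharTwo.add_self_eq_zero (u i)

/-- a vector with vanishing determinant is a multiple -/
lemma dt_zero {F : Type*} [Field F] [CharP F 2] (u v : Fin 2 → F) (hu : u ≠ 0) (h : dt u v = 0) :
    ∃ c : F, v = c • u := by
  have h' : u 0 * v 1 = u 1 * v 0 := by
    have := CharTwo.add_self_eq_zero (u 1 * v 0)
    simp only [dt] at h
    linear_combination h - this
  by_cases h0 : u 0 = 0
  · have h1 : u 1 ≠ 0 := by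
      intro h1; apply hu; funext i; fin_cases i <;> simp [h0, h1]
    refine ⟨v 1 / u 1, ?_⟩
    funext i
    fin_cases i
    · simp; field_simp; linear_combination -h'
    · simp; field_simp
  · refine ⟨v 0 / u 0, ?_⟩
    funext i
    fin_cases i
    · simp; field_simp
    · simp; field_simp; linear_combination h'

/-- the club relation with head `i` -/
def Rel {F : Type*} [Field F] (p : Fin 5 → Fin 2 → F) (i : Fin 5) : Prop :=
  ∑ k, (dt (p i) (p k))⁻¹ • p k = 0

lemma inj5 (i k0 k1 k2 k3 : Fin 5) (hk0 : k0 ≠ i) (hk1 : k1 ≠ i) (hk2 : k2 ≠ i) (hk3 : k3 ≠ i)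
    (n01 : k0 ≠ k1) (n02 : k0 ≠ k2) (n03 : k0 ≠ k3) (n12 : k1 ≠ k2) (n13 : k1 ≠ k3)
    (n23 : k2 ≠ k3) : Function.Injective ![i, k0, k1, k2, k3] := by
  intro x y hxy
  fin_cases x <;> fin_cases y <;> simp at hxy ⊢ <;> omega

set_option maxHeartbeats 1000000 in
lemma exists_rel {F : Type*} [Field F] [CharP F 2] (p : Fin 5 → Fin 2 → F)
    (hp : ∀ i j, i ≠ j → dt (p i) (p j) ≠ 0)
    (U : AddSubgroup (Fin 2 → F))
    (h1 : ∀ u ∈ U, u ≠ 0 → ∃ i, ∃ c : F, u = c • p i)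
    (h2 : ∀ i, ∃ c : F, c ≠ 0 ∧ c • p i ∈ U) : ∃ i, Rel p i := by
  have ind : ∀ i j (c d : F), c ≠ 0 → c • p i = d • p j → i = j := by
    intro i j c d hc h
    by_contra hij
    have := congrArg (dt (p j)) h
    rw [dt_smul, dt_smul, dt_self, mul_zero] at this
    rcases mul_eq_zero.1 this with h | h
    · exact hc h
    · exact hp j i (Ne.symm hij) h
  have pne : ∀ i, p i ≠ 0 := by
    intro i h
    apply hp i (i + 1) (by fin_cases i <;> decide)
    simp [dt, h]
  by_cases hu : ∃ i, ∃ a b : F, a ≠ 0 ∧ b ≠ 0 ∧ a ≠ b ∧ a • p i ∈ U ∧ b • p i ∈ U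
  · obtain ⟨i, a, b, ha, hb, hab, haU, hbU⟩ := hu
    refine ⟨i, ?_⟩
    have hj : ∃ j : Fin 5, j ≠ i := ⟨i + 1, by fin_cases i <;> decide⟩
    obtain ⟨j, hji⟩ := hj
    obtain ⟨c, hc, hcU⟩ := h2 j
    have key : ∀ s : F, s • p i ∈ U → ∃ k, k ≠ i ∧ ∃ d : F, c • p j + s • p i = d • p k := by
      intro s hs
      have hne : c • p j + s • p i ≠ 0 := by
        intro h
        have := congrArg (dt (p i)) h
        rw [dt_add, dt_smul, dt_smul, dt_self, mul_zero, add_zero] at this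
        rcases mul_eq_zero.1 (this.trans (by simp [dt])) with h | h
        · exact hc h
        · exact hp i j hji.symm h
      obtain ⟨k, d, hd⟩ := h1 _ (U.add_mem hcU hs) hne
      refine ⟨k, ?_, d, hd⟩
      rintro rfl
      have := congrArg (dt (p k)) hd
      rw [dt_add, dt_smul, dt_smul, dt_smul, dt_self, mul_zero, mul_zero, add_zero] at this
      rcases mul_eq_zero.1 this with h | h
      · exact hc h
      · exact hp k j hji.symm h
    have dist : ∀ (s t : F) (k l : Fin 5) (d e : F), k ≠ i → s ≠ t → c • p j + s • p i = d • p k →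
        c • p j + t • p i = e • p l → k ≠ l := by
      rintro s t k l d e hk hst h h' rfl
      have : (s - t) • p i = (d - e) • p k := by
        rw [sub_smul, sub_smul, ← h, ← h']; abel
      exact hk (ind _ _ _ _ (sub_ne_zero.2 hst) this).symm
    have val : ∀ (s : F) (k : Fin 5) (d : F), k ≠ i → c • p j + s • p i = d • p k →
        (dt (p i) (p k))⁻¹ • p k = (c * dt (p i) (p j))⁻¹ • (c • p j + s • p i) := by
      intro s k d hk h
      have h3 := congrArg (dt (p i)) h
      rw [dt_add, dt_smul, dt_smul, dt_smul, dt_self, mul_zero, add_zero] at h3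
      have hd : d ≠ 0 := by
        rintro rfl
        rw [zero_mul] at h3
        rcases mul_eq_zero.1 h3 with h | h
        · exact hc h
        · exact hp i j hji.symm h
      rw [h, h3, smul_smul]
      congr 1
      have := hp i k hk.symm
      field_simp
    have habs : a + b ≠ 0 := fun h => hab (CharTwo.add_eq_zero.1 h)
    obtain ⟨k0, hk0, d0, e0⟩ := key 0 (by simp)
    obtain ⟨k1, hk1, d1, e1⟩ := key a haU
    obtain ⟨k2, hk2, d2, e2⟩ := key b hbU
    obtain ⟨k3, hk3, d3, e3⟩ := key (a + b) (by rw [add_smul]; exact U.add_mem haU hbU)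
    have n01 := dist _ _ _ _ _ _ hk0 ha.symm e0 e1
    have n02 := dist _ _ _ _ _ _ hk0 hb.symm e0 e2
    have n03 := dist _ _ _ _ _ _ hk0 habs.symm e0 e3
    have n12 := dist _ _ _ _ _ _ hk1 hab e1 e2
    have n13 := dist _ _ _ _ _ _ hk1 (by simpa using hb) e1 e3
    have n23 := dist _ _ _ _ _ _ hk2 (by simpa using ha) e2 e3
    have hinj := inj5 i k0 k1 k2 k3 hk0 hk1 hk2 hk3 n01 n02 n03 n12 n13 n23
    have hbij := Finite.injective_iff_bijective.1 hinj
    unfold Rel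
    rw [← hbij.sum_comp (fun k => (dt (p i) (p k))⁻¹ • p k)]
    simp only [Fin.sum_univ_five]
    have v0 := val _ _ _ hk0 e0
    have v1 := val _ _ _ hk1 e1
    have v2 := val _ _ _ hk2 e2
    have v3 := val _ _ _ hk3 e3
    change (dt (p i) (p i))⁻¹ • p i + (dt (p i) (p k0))⁻¹ • p k0 + (dt (p i) (p k1))⁻¹ • p k1
      + (dt (p i) (p k2))⁻¹ • p k2 + (dt (p i) (p k3))⁻¹ • p k3 = 0
    rw [v0, v1, v2, v3, dt_self, inv_zero, zero_smul, zero_add, ← smul_add, ← smul_add, ← smul_add]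
    have hz : c • p j + (0 : F) • p i + (c • p j + a • p i) + (c • p j + b • p i)
        + (c • p j + (a + b) • p i) = 0 := by
      have q1 := vadd_self (c • p j)
      have q2 := vadd_self (a • p i)
      have q3 := vadd_self (b • p i)
      rw [zero_smul, add_smul]
      calc _ = (c • p j + c • p j) + (c • p j + c • p j) + (a • p i + a • p i)
            + (b • p i + b • p i) := by abel
        _ = 0 := by rw [q1, q2, q3]; simp
    rw [zero_smul] at hz
    rw [hz, smul_zero]
  · exfalso
    push Not at hu
    choose c hc hcU using h2
    have uniq : ∀ i (s : F), s ≠ 0 → s • p i ∈ U → s = c i := by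
      intro i s hs hsU
      by_contra hne
      exact hu i s (c i) hs (hc i) hne hsU (hcU i)
    let w : Fin 5 → Fin 2 → F := fun i => c i • p i
    have hw0 : ∀ i, w i ≠ 0 := fun i => smul_ne_zero (hc i) (pne i)
    have winj : ∀ i j, w i = w j → i = j := fun i j h => ind i j _ _ (hc i) h
    have wadd : ∀ i j, i ≠ j → ∃ k, w i + w j = w k := by
      intro i j hij
      have hne : w i + w j ≠ 0 := by
        intro h
        apply hij
        apply winj
        have := vadd_self (w j)
        calc w i = w i + (w j + w j) := by rw [this, add_zero]
          _ = w j := by rw [← add_assoc, h, zero_add]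
      obtain ⟨k, d, hd⟩ := h1 _ (U.add_mem (hcU i) (hcU j)) hne
      refine ⟨k, ?_⟩
      have hd0 : d ≠ 0 := by
        rintro rfl
        rw [zero_smul] at hd
        exact hne hd
      have hdU : d • p k ∈ U := by rw [← hd]; exact U.add_mem (hcU i) (hcU j)
      rw [uniq k d hd0 hdU] at hd
      exact hd
    have cyc : ∀ x y z : Fin 2 → F, x + y = z → x + z = y := by
      intro x y z h
      rw [← h, ← add_assoc, vadd_self, zero_add]
    obtain ⟨k, hk⟩ := wadd 0 1 (by decide)
    have hk0 : k ≠ 0 := by rintro rfl; exact hw0 1 (by simpa using hk)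
    have hk1 : k ≠ 1 := by rintro rfl; exact hw0 0 (by simpa using hk)
    have hl : ∃ l : Fin 5, l ≠ 0 ∧ l ≠ 1 ∧ l ≠ k := by
      have : ∀ k : Fin 5, ∃ l : Fin 5, l ≠ 0 ∧ l ≠ 1 ∧ l ≠ k := by
        intro k
        by_cases h2 : k = 2
        · exact ⟨3, by omega, by omega, by omega⟩
        · exact ⟨2, by omega, by omega, by omega⟩
      exact this k
    obtain ⟨l, hl0, hl1, hlk⟩ := hl
    obtain ⟨m, hm⟩ := wadd 0 l hl0.symm
    obtain ⟨n, hn⟩ := wadd 1 l hl1.symm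
    have m0 : m ≠ 0 := by rintro rfl; exact hw0 l (by simpa using hm)
    have ml : m ≠ l := by rintro rfl; exact hw0 0 (by simpa using hm)
    have n1 : n ≠ 1 := by rintro rfl; exact hw0 l (by simpa using hn)
    have nl : n ≠ l := by rintro rfl; exact hw0 1 (by simpa using hn)
    have m1 : m ≠ 1 := by
      rintro rfl
      exact hlk (winj _ _ ((cyc _ _ _ hm).symm.trans hk))
    have mk : m ≠ k := by
      rintro rfl
      exact hl1 (winj _ _ (add_left_cancel (hm.trans hk.symm)))
    have n0 : n ≠ 0 := by
      rintro rfl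
      exact hlk (winj _ _ ((cyc _ _ _ hn).symm.trans ((add_comm _ _).trans hk)))
    have nk : n ≠ k := by
      rintro rfl
      exact hl0 (winj _ _ (add_left_cancel (hn.trans (hk.symm.trans (add_comm _ _)))))
    have mn : m ≠ n := by
      rintro rfl
      have := winj _ _ (add_right_cancel (hm.trans hn.symm))
      exact absurd this (by decide)
    omega

lemma of_rel {F : Type*} [Field F] [CharP F 2] (p : Fin 5 → Fin 2 → F)
    (hp : ∀ i j, i ≠ j → dt (p i) (p j) ≠ 0) (i : Fin 5) (hr : Rel p i) :
    ∃ U : AddSubgroup (Fin 2 → F),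
      (∀ u ∈ U, u ≠ 0 → ∃ i, ∃ c : F, u = c • p i) ∧ (∀ i, ∃ c : F, c ≠ 0 ∧ c • p i ∈ U) := by
  have pne : ∀ i, p i ≠ 0 := by
    intro i h
    apply hp i (i + 1) (by fin_cases i <;> decide)
    simp [dt, h]
  let e := Equiv.swap 0 i
  have he0 : e 0 = i := Equiv.swap_apply_left 0 i
  have hne : ∀ j, j ≠ 0 → i ≠ e j := by
    intro j hj h
    rw [← he0] at h
    exact hj (e.injective h).symm
  let q : Fin 5 → Fin 2 → F := fun j => (dt (p i) (p (e j)))⁻¹ • p (e j)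
  have hq0 : q 0 = 0 := by simp only [q]; rw [he0, dt_self]; simp
  have hqd : ∀ j, j ≠ 0 → dt (p i) (q j) = 1 := by
    intro j hj
    simp only [q]
    rw [dt_smul, inv_mul_cancel₀ (hp _ _ (hne j hj))]
  have hsum : q 1 + q 2 + q 3 + q 4 = 0 := by
    have h := hr
    unfold Rel at h
    rw [← Equiv.sum_comp e (fun k => (dt (p i) (p k))⁻¹ • p k)] at h
    change ∑ j, q j = 0 at h
    rwa [Fin.sum_univ_five, hq0, zero_add] at h
  have hq4 : q 4 = q 1 + q 2 + q 3 := by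
    have := vadd_self (q 4)
    calc q 4 = (q 1 + q 2 + q 3 + q 4) + q 4 := by rw [hsum, zero_add]
      _ = _ := by rw [add_assoc, this, add_zero]
  have hdiff : ∀ j k, j ≠ 0 → k ≠ 0 → ∃ c : F, q j + q k = c • p i := by
    intro j k hj hk
    apply dt_zero _ _ (pne i)
    rw [dt_add, hqd j hj, hqd k hk]
    exact CharTwo.add_self_eq_zero 1
  letI : Algebra (ZMod 2) F := ZMod.algebra F 2
  let S : Submodule (ZMod 2) (Fin 2 → F) := Submodule.span (ZMod 2) {q 1, q 2, q 3}
  have m1 : q 1 ∈ S := Submodule.subset_span (by simp)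
  have m2 : q 2 ∈ S := Submodule.subset_span (by simp)
  have m3 : q 3 ∈ S := Submodule.subset_span (by simp)
  have m4 : q 4 ∈ S := by rw [hq4]; exact S.add_mem (S.add_mem m1 m2) m3
  refine ⟨S.toAddSubgroup, ?_, ?_⟩
  · intro u hu hu0
    have hu' : u ∈ Submodule.span (ZMod 2) {q 1, q 2, q 3} := hu
    rw [Submodule.mem_span_triple] at hu'
    obtain ⟨x, y, z, rfl⟩ := hu'
    have two : ∀ x : ZMod 2, x = 0 ∨ x = 1 := by decide
    rcases two x with rfl | rfl <;> rcases two y with rfl | rfl <;> rcases two z with rfl | rfl <;>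
      simp only [zero_smul, one_smul, zero_add, add_zero] at hu0 ⊢
    · exact absurd rfl hu0
    · exact ⟨_, _, rfl⟩
    · exact ⟨_, _, rfl⟩
    · exact ⟨i, hdiff 2 3 (by decide) (by decide)⟩
    · exact ⟨_, _, rfl⟩
    · exact ⟨i, hdiff 1 3 (by decide) (by decide)⟩
    · exact ⟨i, hdiff 1 2 (by decide) (by decide)⟩
    · rw [← hq4]; exact ⟨_, _, rfl⟩
  · intro k
    obtain ⟨j, rfl⟩ := e.surjective k
    by_cases hj : j = 0
    · subst hj
      obtain ⟨c, hc⟩ := hdiff 1 2 (by decide) (by decide)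
      refine ⟨c, ?_, ?_⟩
      · rintro rfl
        rw [zero_smul] at hc
        have h12 : q 1 = q 2 := by
          have := vadd_self (q 2)
          calc q 1 = (q 1 + q 2) + q 2 := by rw [add_assoc, this, add_zero]
            _ = q 2 := by rw [hc, zero_add]
        have h3 := congrArg (dt (p (e 1))) h12
        simp only [q] at h3
        rw [dt_smul, dt_smul, dt_self, mul_zero] at h3
        rcases mul_eq_zero.1 h3.symm with h | h
        · exact inv_ne_zero (hp _ _ (hne 2 (by decide))) h
        · exact hp _ _ (fun h => absurd (e.injective h) (by decide)) h
      · rw [he0, ← hc]; exact S.add_mem m1 m2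
    · refine ⟨(dt (p i) (p (e j)))⁻¹, inv_ne_zero (hp _ _ (hne j hj)), ?_⟩
      change q j ∈ S
      fin_cases j
      · exact absurd rfl hj
      · exact m1
      · exact m2
      · exact m3
      · exact m4

/-- translation between sets of projective points and vectors -/
lemma linear_iff {F : Type*} [Field F] (p : Fin 5 → Fin 2 → F) (pne : ∀ i, p i ≠ 0) :
    IsF2Linear (Set.range fun i => Projectivization.mk F (p i) (pne i)) ↔
    ∃ U : AddSubgroup (Fin 2 → F),
      (∀ u ∈ U, u ≠ 0 → ∃ i, ∃ c : F, u = c • p i) ∧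
        (∀ i, ∃ c : F, c ≠ 0 ∧ c • p i ∈ U) := by
  unfold IsF2Linear
  refine exists_congr fun U => ?_
  constructor
  · intro h
    constructor
    · intro u hu hu0
      have : Projectivization.mk F u hu0 ∈
          Set.range fun i => Projectivization.mk F (p i) (pne i) := by
        rw [h]; exact ⟨u, hu0, hu, rfl⟩
      obtain ⟨i, hi⟩ := this
      obtain ⟨c, hc⟩ := (Projectivization.mk_eq_mk_iff' F _ _ _ _).1 hi.symm
      exact ⟨i, c, hc.symm⟩
    · intro i
      have : Projectivization.mk F (p i) (pne i) ∈
          Set.range fun i => Projectivization.mk F (p i) (pne i) := ⟨i, rfl⟩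
      rw [h] at this
      obtain ⟨u, hu0, hu, he⟩ := this
      obtain ⟨c, hc⟩ := (Projectivization.mk_eq_mk_iff' F _ _ _ _).1 he
      refine ⟨c, ?_, hc ▸ hu⟩
      rintro rfl
      exact hu0 (by rw [← hc, zero_smul])
  · rintro ⟨h1, h2⟩
    ext P
    constructor
    · rintro ⟨i, rfl⟩
      obtain ⟨c, hc, hU⟩ := h2 i
      exact ⟨c • p i, smul_ne_zero hc (pne i), hU,
        (Projectivization.mk_eq_mk_iff' F _ _ _ _).2 ⟨c, rfl⟩⟩
    · rintro ⟨u, hu0, hu, rfl⟩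
      obtain ⟨i, c, hc⟩ := h1 u hu hu0
      exact ⟨i, ((Projectivization.mk_eq_mk_iff' F _ _ _ _).2 ⟨c, hc.symm⟩).symm⟩

/-- the five representative vectors -/
def pv {F : Type*} [Field F] (γ β : F) : Fin 5 → Fin 2 → F :=
  ![![1, 0], ![0, 1], ![1, 1], ![γ, 1], ![β + 1, 1]]

lemma pv_dt {F : Type*} [Field F] [CharP F 2] (γ β : F) (hγ0 : γ ≠ 0) (hγ1 : γ ≠ 1)
    (hβ0 : β ≠ 0) (hβ1 : β ≠ 1) (hβγ : β + 1 ≠ γ) (i j : Fin 5) (hij : i ≠ j) :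
    dt (pv γ β i) (pv γ β j) ≠ 0 := by
  have h2 : (2 : F) = 0 := CharTwo.two_eq_zero
  fin_cases i <;> fin_cases j <;> simp [pv, dt] at hij ⊢ <;> grind

lemma rel_iff {F : Type*} [Field F] [CharP F 2] (γ β : F) (hγ0 : γ ≠ 0) (hγ1 : γ ≠ 1)
    (hβ0 : β ≠ 0) (hβ1 : β ≠ 1) (hβγ : β + 1 ≠ γ) :
    (∃ i, Rel (pv γ β) i) ↔
      (β = γ ∨ β = (γ + 1)⁻¹ ∨ β ^ 2 = γ + 1 ∨ β = 1 + γ⁻¹ ∨ β = 1 + γ ^ 2) := by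
  have h2 : (2 : F) = 0 := CharTwo.two_eq_zero
  have g1 : γ + 1 ≠ 0 := fun h => hγ1 (CharTwo.add_eq_zero.1 h)
  have b1 : β + 1 ≠ 0 := fun h => hβ1 (CharTwo.add_eq_zero.1 h)
  have bg : β + 1 + γ ≠ 0 := fun h => hβγ (CharTwo.add_eq_zero.1 h)
  have r0 : Rel (pv γ β) 0 ↔ β = γ := by
    unfold Rel
    rw [Fin.sum_univ_five]
    simp [pv, dt, funext_iff, Fin.forall_fin_two]
    grind
  have r1 : Rel (pv γ β) 1 ↔ β = (γ + 1)⁻¹ := by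
    unfold Rel
    rw [Fin.sum_univ_five]
    simp [pv, dt, funext_iff, Fin.forall_fin_two]
    grind
  have r2 : Rel (pv γ β) 2 ↔ β = 1 + γ⁻¹ := by
    unfold Rel
    rw [Fin.sum_univ_five]
    simp [pv, dt, funext_iff, Fin.forall_fin_two]
    grind
  have r3 : Rel (pv γ β) 3 ↔ β = 1 + γ ^ 2 := by
    unfold Rel
    rw [Fin.sum_univ_five]
    simp [pv, dt, funext_iff, Fin.forall_fin_two]
    grind
  have r4 : Rel (pv γ β) 4 ↔ β ^ 2 = γ + 1 := by
    unfold Rel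
    rw [Fin.sum_univ_five]
    simp [pv, dt, funext_iff, Fin.forall_fin_two]
    grind
  constructor
  · rintro ⟨i, hi⟩
    fin_cases i
    · exact Or.inl (r0.1 hi)
    · exact Or.inr (Or.inl (r1.1 hi))
    · exact Or.inr (Or.inr (Or.inr (Or.inl (r2.1 hi))))
    · exact Or.inr (Or.inr (Or.inr (Or.inr (r3.1 hi))))
    · exact Or.inr (Or.inr (Or.inl (r4.1 hi)))
  · rintro (h | h | h | h | h)
    · exact ⟨_, r0.2 h⟩
    · exact ⟨_, r1.2 h⟩
    · exact ⟨_, r4.2 h⟩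
    · exact ⟨_, r2.2 h⟩
    · exact ⟨_, r3.2 h⟩

lemma coincide {F : Type*} [Field F] [CharP F 2] (γ s : F) (hγ0 : γ ≠ 0) (hγ1 : γ ≠ 1)
    (hs : s ^ 2 = γ + 1)
    (h : ¬ List.Pairwise (· ≠ ·) [γ, (γ + 1)⁻¹, s, 1 + γ⁻¹, 1 + γ ^ 2]) :
    γ ^ 2 + γ + 1 = 0 := by
  have h2 : (2 : F) = 0 := CharTwo.two_eq_zero
  have g1 : γ + 1 ≠ 0 := fun h => hγ1 (CharTwo.add_eq_zero.1 h)
  by_contra hc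
  apply h
  simp only [List.pairwise_cons, List.mem_cons, List.not_mem_nil, or_false, forall_eq_or_imp,
    forall_eq, List.Pairwise.nil, and_true, false_imp_iff, implies_true]
  have cube : ∀ x : F, x ≠ 0 → x ≠ 1 → x ^ 3 = 1 → x ^ 2 + x + 1 = 0 := by
    intro x _ hx1 hx
    have : (x - 1) * (x ^ 2 + x + 1) = 0 := by linear_combination hx
    exact (mul_eq_zero.1 this).resolve_left (sub_ne_zero.2 hx1)
  have hcube : (γ + 1) ^ 3 ≠ 1 := by
    intro h
    have := cube _ g1 (by simpa using hγ0) h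
    apply hc
    linear_combination this - (γ + 1) * h2
  refine ⟨⟨?_, ?_, ?_, ?_⟩, ⟨?_, ?_, ?_⟩, ⟨?_, ?_⟩, ?_⟩
  · intro h; apply hc; field_simp at h; grind
  · intro h; apply hc; grind
  · intro h; apply hc; field_simp at h; grind
  · intro h; apply hc; grind
  · rintro rfl; apply hcube; field_simp at hs; exact hs.symm
  · intro h; apply hc; field_simp at h; grind
  · intro h; apply hcube; field_simp at h; grind
  · rintro rfl; apply hc; field_simp at hs
    linear_combination -hs + (γ + 1) * h2
  · rintro rfl; apply hcube
    have : (γ + 1) * ((γ + 1) ^ 3 - 1) = 0 := by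
      linear_combination hs + (2 * γ ^ 3 + 2 * γ ^ 2 + 2 * γ) * h2
    have := (mul_eq_zero.1 this).resolve_left g1
    linear_combination this
  · intro h; apply hc; field_simp at h
    have : (γ + 1) * (γ ^ 2 + γ + 1) = 0 := by grind
    exact (mul_eq_zero.1 this).resolve_left g1

end ClubAux

/-- Lemma 3.3 of the paper: characterisation of when
`C = {(1:0),(0:1),(1:1),(γ:1),(β+1:1)} ⊆ PG(1,q)` is an `F₂`-linear set, together with
the coincidence case.  Here `β² = γ+1` encodes `β = √(γ+1)`, and `(γ+1)^(2^(h-1))`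
is the unique square root of `γ+1` in `F_q`; `F₄ = {x | x⁴ = x}`. -/
theorem club_characterisation
    {K : Type*} [Field K] [Fintype K] (h : ℕ)
    (hcard : Fintype.card K = 2 ^ h)
    (γ β : K) (hγ0 : γ ≠ 0) (hγ1 : γ ≠ 1) (hβ0 : β ≠ 0) (hβ1 : β ≠ 1) (hβγ : β + 1 ≠ γ) :
    (IsF2Linear ({pt2 (1 : K) 0 (by simp), pt2 (0 : K) 1 (by simp), pt2 (1 : K) 1 (by simp),
          pt2 γ 1 (by simp), pt2 (β + 1) 1 (by simp)} : Set (Projectivization K (Fin 2 → K)))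
        ↔ (β = γ ∨ β = (γ + 1)⁻¹ ∨ β ^ 2 = γ + 1 ∨ β = 1 + γ⁻¹ ∨ β = 1 + γ ^ 2)) ∧
    (¬ List.Pairwise (· ≠ ·)
        [γ, (γ + 1)⁻¹, (γ + 1) ^ 2 ^ (h - 1), 1 + γ⁻¹, 1 + γ ^ 2] →
      ((γ + 1)⁻¹ = γ ∧ (γ + 1) ^ 2 ^ (h - 1) = γ ∧ 1 + γ⁻¹ = γ ∧ 1 + γ ^ 2 = γ) ∧
      γ ^ 3 = 1 ∧
      (β = γ →
        ({pt2 (1 : K) 0 (by simp), pt2 (0 : K) 1 (by simp), pt2 (1 : K) 1 (by simp),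
            pt2 γ 1 (by simp), pt2 (β + 1) 1 (by simp)} : Set (Projectivization K (Fin 2 → K)))
          = {P | ∃ x : K, x ^ 4 = x ∧ P = pt2 1 x (by simp)} ∪ {pt2 (0 : K) 1 (by simp)})) := by

  have hh : h ≠ 0 := by
    rintro rfl
    have := Fintype.one_lt_card (α := K)
    omega
  haveI : CharP K 2 := by
    obtain ⟨q, hq⟩ := CharP.exists K
    haveI := hq
    obtain ⟨n, hp, hn⟩ := FiniteField.card K q
    rw [hcard] at hn
    have : q ∣ 2 ^ h := by rw [hn]; exact dvd_pow_self q n.ne_zero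
    have h3 := hp.dvd_of_dvd_pow this
    have : q = 2 := (Nat.prime_dvd_prime_iff_eq hp Nat.prime_two).1 h3
    exact this ▸ hq
  have h2 : (2 : K) = 0 := CharTwo.two_eq_zero
  have hp := ClubAux.pv_dt γ β hγ0 hγ1 hβ0 hβ1 hβγ
  have pne : ∀ i, ClubAux.pv γ β i ≠ 0 := by
    intro i h
    apply hp i (i + 1) (by fin_cases i <;> decide)
    simp [ClubAux.dt, h]
  constructor
  · rw [← ClubAux.rel_iff γ β hγ0 hγ1 hβ0 hβ1 hβγ]
    have hset : ({pt2 (1 : K) 0 (by simp), pt2 (0 : K) 1 (by simp), pt2 (1 : K) 1 (by simp),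
          pt2 γ 1 (by simp), pt2 (β + 1) 1 (by simp)} : Set (Projectivization K (Fin 2 → K)))
        = Set.range fun i => Projectivization.mk K (ClubAux.pv γ β i) (pne i) := by
      ext P
      simp only [Set.mem_insert_iff, Set.mem_singleton_iff, Set.mem_range]
      constructor
      · rintro (rfl | rfl | rfl | rfl | rfl)
        · exact ⟨0, rfl⟩
        · exact ⟨1, rfl⟩
        · exact ⟨2, rfl⟩
        · exact ⟨3, rfl⟩
        · exact ⟨4, rfl⟩
      · rintro ⟨i, rfl⟩
        fin_cases i
        · exact Or.inl rfl
        · exact Or.inr (Or.inl rfl)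
        · exact Or.inr (Or.inr (Or.inl rfl))
        · exact Or.inr (Or.inr (Or.inr (Or.inl rfl)))
        · exact Or.inr (Or.inr (Or.inr (Or.inr rfl)))
    rw [hset, ClubAux.linear_iff]
    constructor
    · rintro ⟨U, h1, h3⟩
      exact ClubAux.exists_rel _ hp U h1 h3
    · rintro ⟨i, hi⟩
      exact ClubAux.of_rel _ hp i hi
  · intro hnp
    have hs : ((γ + 1) ^ 2 ^ (h - 1)) ^ 2 = γ + 1 := by
      rw [← pow_mul, ← pow_succ, Nat.sub_add_cancel (Nat.pos_of_ne_zero hh), ← hcard,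
        FiniteField.pow_card]
    have hq := ClubAux.coincide γ _ hγ0 hγ1 hs hnp
    have hsq : γ ^ 2 = γ + 1 := by linear_combination hq - (γ + 1) * h2
    have g1 : γ + 1 ≠ 0 := fun h => hγ1 (CharTwo.add_eq_zero.1 h)
    have hinv : γ⁻¹ = γ + 1 := by field_simp; linear_combination -hq + h2
    have h3 : γ ^ 3 = 1 := by linear_combination (γ - 1) * hq
    refine ⟨⟨?_, ?_, ?_, ?_⟩, h3, ?_⟩
    · rw [← hinv, inv_inv]
    · have : ((γ + 1) ^ 2 ^ (h - 1) + γ) ^ 2 = 0 := by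
        rw [CharTwo.add_sq, hs, hsq]; exact CharTwo.add_self_eq_zero _
      exact CharTwo.add_eq_zero.1 ((pow_eq_zero_iff two_ne_zero).1 this)
    · rw [hinv]; linear_combination h2
    · rw [hsq]; linear_combination h2
    · rintro rfl
      have hmk : ∀ (a b c d : K) (hab : ¬(a = 0 ∧ b = 0)) (hcd : ¬(c = 0 ∧ d = 0)) (t : K),
          t * c = a → t * d = b → pt2 a b hab = pt2 c d hcd := by
        intro a b c d hab hcd t h1 h4
        unfold pt2
        rw [Projectivization.mk_eq_mk_iff']
        refine ⟨t, ?_⟩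
        funext i
        fin_cases i
        · simpa using h1
        · simpa using h4
      ext P
      simp only [Set.mem_insert_iff, Set.mem_singleton_iff, Set.mem_union, Set.mem_setOf_eq]
      constructor
      · rintro (rfl | rfl | rfl | rfl | rfl)
        · exact Or.inl ⟨0, by simp, rfl⟩
        · exact Or.inr rfl
        · exact Or.inl ⟨1, by simp, rfl⟩
        · refine Or.inl ⟨β + 1, by grind, hmk _ _ _ _ _ _ β (by ring) (by grind)⟩
        · refine Or.inl ⟨β, by grind, hmk _ _ _ _ _ _ (β + 1) (by ring) (by grind)⟩
      · rintro (⟨x, hx, rfl⟩ | rfl)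
        · have : x * ((x - 1) * ((x + β) * (x + β + 1))) = 0 := by grind
          rcases mul_eq_zero.1 this with h | h
          · subst h; exact Or.inl rfl
          rcases mul_eq_zero.1 h with h | h
          · obtain rfl := sub_eq_zero.1 h
            exact Or.inr (Or.inr (Or.inl rfl))
          rcases mul_eq_zero.1 h with h | h
          · obtain rfl := CharTwo.add_eq_zero.1 h
            refine Or.inr (Or.inr (Or.inr (Or.inr (hmk _ _ _ _ _ _ x (by grind) (by ring)))))
          · have h : x = β + 1 := by linear_combination h - (β + 1) * h2
            subst h
            refine Or.inr (Or.inr (Or.inr (Or.inl (hmk _ _ _ _ _ _ (β + 1) (by grind) (by ring)))))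
        · exact Or.inr (Or.inl rfl)
end
end

section
/- Let q = 2^h, let α, β ∈ F_q \ {0,1} with αβ ≠ 1, and set γ = (β+1)/(αβ+1). Then the set C = {(1:0), (0:1), (1:1), (γ:1), (β+1:1)} of points of PG(1,q) is an F_2-linear set if and only if α ∈ {1/β², 1 + 1/β, β, 1/√β, 1/(β+1)}, where √β denotes the unique square root of β in F_q (i.e. the condition α = 1/√β means α²β = 1). -/
open scoped Classical

noncomputable section

variable {K : Type*} [Field K]

theorem mk_eq_inf {K : Type*} [Field K] (u : Fin 2 → K) (hu : u ≠ 0) (hx) :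
    Projectivization.mk K u hu = pt2 (1 : K) 0 hx ↔ u 1 = 0 := by
  unfold pt2
  rw [Projectivization.mk_eq_mk_iff']
  constructor
  · rintro ⟨a, rfl⟩
    simp
  · intro h
    refine ⟨u 0, ?_⟩
    funext i
    fin_cases i <;> simp [h]

theorem mk_eq_fin {K : Type*} [Field K] (r : K) (u : Fin 2 → K) (hu : u ≠ 0) (hx) :
    Projectivization.mk K u hu = pt2 r 1 hx ↔ u 0 = r * u 1 := by
  unfold pt2
  rw [Projectivization.mk_eq_mk_iff']
  constructor
  · rintro ⟨a, rfl⟩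
    simp [mul_comm]
  · intro h
    refine ⟨u 1, ?_⟩
    funext i
    fin_cases i <;> simp [h, mul_comm]

/-- concrete reformulation of linearity for `{∞, p, r₁, r₂, r₃}` -/
theorem linear_iff {K : Type*} [Field K] (p r s t : K) (h0 h1 h2 h3 h4) :
    IsF2Linear ({pt2 (1 : K) 0 h0, pt2 p 1 h1, pt2 r 1 h2, pt2 s 1 h3, pt2 t 1 h4} :
      Set (Projectivization K (Fin 2 → K))) ↔
    ∃ U : AddSubgroup (Fin 2 → K),
      (∀ u ∈ U, u ≠ 0 → (u 1 = 0 ∨ u 0 = p * u 1 ∨ u 0 = r * u 1 ∨ u 0 = s * u 1 ∨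
        u 0 = t * u 1)) ∧
      (∃ a : K, a ≠ 0 ∧ ![a, 0] ∈ U) ∧
      ∀ z, (z = p ∨ z = r ∨ z = s ∨ z = t) → ∃ a : K, a ≠ 0 ∧ ![z * a, a] ∈ U := by
  have fin1 : ∀ (U : AddSubgroup (Fin 2 → K)) (z : K) (hz),
      (∃ u : Fin 2 → K, ∃ hu : u ≠ 0, u ∈ U ∧ Projectivization.mk K u hu = pt2 z 1 hz) ↔
        ∃ a : K, a ≠ 0 ∧ ![z * a, a] ∈ U := by
    intro U z hz
    constructor
    · rintro ⟨u, hu, hU, he⟩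
      rw [mk_eq_fin] at he
      have e : u = ![z * u 1, u 1] := by
        funext i; fin_cases i <;> simp [he]
      refine ⟨u 1, ?_, e ▸ hU⟩
      intro h
      apply hu
      rw [e, h]; funext i; fin_cases i <;> simp
    · rintro ⟨a, ha, hU⟩
      refine ⟨_, ?_, hU, ?_⟩
      · intro h; exact ha (by simpa using congrFun h 1)
      · rw [mk_eq_fin]; simp
  have inf1 : ∀ (U : AddSubgroup (Fin 2 → K)) (hz),
      (∃ u : Fin 2 → K, ∃ hu : u ≠ 0, u ∈ U ∧ Projectivization.mk K u hu = pt2 (1 : K) 0 hz) ↔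
        ∃ a : K, a ≠ 0 ∧ ![a, 0] ∈ U := by
    intro U hz
    constructor
    · rintro ⟨u, hu, hU, he⟩
      rw [mk_eq_inf] at he
      have e : u = ![u 0, 0] := by
        funext i; fin_cases i <;> simp [he]
      refine ⟨u 0, ?_, e ▸ hU⟩
      intro h
      apply hu
      rw [e, h]; funext i; fin_cases i <;> simp
    · rintro ⟨a, ha, hU⟩
      refine ⟨_, ?_, hU, ?_⟩
      · intro h; exact ha (by simpa using congrFun h 0)
      · rw [mk_eq_inf]; simp
  unfold IsF2Linear
  refine exists_congr fun U => ?_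
  constructor
  · intro hT
    refine ⟨?_, ?_, ?_⟩
    · intro u hu hne
      have : Projectivization.mk K u hne ∈ ({pt2 (1 : K) 0 h0, pt2 p 1 h1, pt2 r 1 h2, pt2 s 1 h3,
          pt2 t 1 h4} : Set (Projectivization K (Fin 2 → K))) := by
        rw [hT]; exact ⟨u, hne, hu, rfl⟩
      simpa only [Set.mem_insert_iff, Set.mem_singleton_iff, mk_eq_inf, mk_eq_fin] using this
    · rw [← inf1 U h0]
      have : pt2 (1 : K) 0 h0 ∈ ({pt2 (1 : K) 0 h0, pt2 p 1 h1, pt2 r 1 h2, pt2 s 1 h3,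
          pt2 t 1 h4} : Set (Projectivization K (Fin 2 → K))) := by simp
      rw [hT] at this; exact this
    · intro z hz
      rw [← fin1 U z (by simp)]
      have : pt2 z 1 (by simp) ∈ ({pt2 (1 : K) 0 h0, pt2 p 1 h1, pt2 r 1 h2, pt2 s 1 h3,
          pt2 t 1 h4} : Set (Projectivization K (Fin 2 → K))) := by
        rcases hz with rfl | rfl | rfl | rfl <;> simp
      rw [hT] at this; exact this
  · rintro ⟨hA, hI, hF⟩
    apply Set.Subset.antisymm
    · rintro P hP
      simp only [Set.mem_insert_iff, Set.mem_singleton_iff] at hP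
      rcases hP with rfl | rfl | rfl | rfl | rfl
      · exact (inf1 U _).2 hI
      · exact (fin1 U _ _).2 (hF _ (by simp))
      · exact (fin1 U _ _).2 (hF _ (by simp))
      · exact (fin1 U _ _).2 (hF _ (by simp))
      · exact (fin1 U _ _).2 (hF _ (by simp))
    · rintro P ⟨u, hu, hU, rfl⟩
      simpa only [Set.mem_insert_iff, Set.mem_singleton_iff, mk_eq_inf, mk_eq_fin] using hA u hU hu

/-- three distinct nonzero elements `x, y, x+y` of `{l, m, n}` force `l+m+n=0` -/
theorem sum_zero {K : Type*} [Field K] (h2 : ∀ x : K, x + x = 0) (x y l m n : K)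
    (hx : x ≠ 0) (hy : y ≠ 0) (hxy : x ≠ y)
    (h : ∀ z, z ≠ 0 → (z = x ∨ z = y ∨ z = x + y) → z = l ∨ z = m ∨ z = n) : l + m + n = 0 := by
  have e : x + y ≠ 0 := by
    intro h0; exact hxy (by linear_combination h0 - h2 y)
  have a1 := h x hx (by simp)
  have a2 := h y hy (by simp)
  have a3 := h (x + y) e (by simp)
  have b1 := h2 x
  have b2 := h2 y
  rcases a1 with a1 | a1 | a1 <;> rcases a2 with a2 | a2 | a2 <;>
    rcases a3 with a3 | a3 | a3 <;> grind

theorem five_aux {G : Type*} [AddCommGroup G] (h2 : ∀ x : G, x + x = 0)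
    (a b c d e : G) (hb : b ≠ 0) (ha : a ≠ 0)
    (hab : a ≠ b) (hac : a ≠ c) (had : a ≠ d) (hbc : b ≠ c) (hbd : b ≠ d)
    (hcd : c ≠ d) (hd : d ≠ 0)
    (habc : a + b = c)
    (h1 : a + d = 0 ∨ a + d = a ∨ a + d = b ∨ a + d = c ∨ a + d = d ∨ a + d = e)
    (h3 : b + d = 0 ∨ b + d = a ∨ b + d = b ∨ b + d = c ∨ b + d = d ∨ b + d = e) : False := by
  have ea := h2 a
  have eb := h2 b
  have ed := h2 d
  have k1 : a + d = e := by
    rcases h1 with h | h | h | h | h | h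
    · exact absurd (by grind) had
    · exact absurd (by grind) hd
    · exact absurd (by grind) hcd
    · exact absurd (by grind) hbd
    · exact absurd (by grind) ha
    · exact h
  have k2 : b + d = e := by
    rcases h3 with h | h | h | h | h | h
    · exact absurd (by grind) hbd
    · exact absurd (by grind) hcd
    · exact absurd (by grind) hd
    · exact absurd (by grind) had
    · exact absurd (by grind) hb
    · exact h
  exact hab (by grind)

theorem five {G : Type*} [AddCommGroup G] (h2 : ∀ x : G, x + x = 0)
    (U : AddSubgroup G) (a b c d e : G)
    (ha : a ≠ 0) (hb : b ≠ 0) (hc : c ≠ 0) (hd : d ≠ 0) (he : e ≠ 0)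
    (hab : a ≠ b) (hac : a ≠ c) (had : a ≠ d) (hae : a ≠ e) (hbc : b ≠ c) (hbd : b ≠ d)
    (hbe : b ≠ e) (hcd : c ≠ d) (hce : c ≠ e) (hde : d ≠ e)
    (ma : a ∈ U) (mb : b ∈ U) (mc : c ∈ U) (md : d ∈ U)
    (h : ∀ u ∈ U, u = 0 ∨ u = a ∨ u = b ∨ u = c ∨ u = d ∨ u = e) : False := by
  have ea := h2 a
  have eb := h2 b
  rcases h _ (U.add_mem ma mb) with k | k | k | k | k | k
  · exact hab (by grind)
  · exact hb (by grind)
  · exact ha (by grind)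
  · exact five_aux h2 a b c d e hb ha hab hac had hbc hbd hcd hd k
      (h _ (U.add_mem ma md)) (h _ (U.add_mem mb md))
  · exact five_aux h2 a b d c e hb ha hab had hac hbd hbc hcd.symm hc k
      (by have := h _ (U.add_mem ma mc); tauto) (by have := h _ (U.add_mem mb mc); tauto)
  · exact five_aux h2 a b e c d hb ha hab hae hac hbe hbc hce.symm hc k
      (by have := h _ (U.add_mem ma mc); tauto) (by have := h _ (U.add_mem mb mc); tauto)

theorem add_ne {K : Type*} [Field K] (h2 : ∀ x : K, x + x = 0) {x y : K} (h : x ≠ y) :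
    x + y ≠ 0 := by
  intro h0; exact h (by linear_combination h0 - h2 y)

/-- two elements at a finite point `p` -/
theorem fin_cond {K : Type*} [Field K] (h2 : ∀ x : K, x + x = 0) (p r s t : K)
    (hr : p ≠ r) (hs : p ≠ s) (ht : p ≠ t) (U : AddSubgroup (Fin 2 → K))
    (hU : ∀ u ∈ U, u ≠ 0 → (u 1 = 0 ∨ u 0 = p * u 1 ∨ u 0 = r * u 1 ∨ u 0 = s * u 1 ∨
        u 0 = t * u 1)) (a : K) (ha : a ≠ 0) (ma : ![a, 0] ∈ U)
    (x y : K) (hx : x ≠ 0) (hy : y ≠ 0) (hxy : x ≠ y)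
    (mx : ![p * x, x] ∈ U) (my : ![p * y, y] ∈ U) :
    (p + r)⁻¹ + (p + s)⁻¹ + (p + t)⁻¹ = 0 := by
  have nr := add_ne h2 hr
  have ns := add_ne h2 hs
  have nt := add_ne h2 ht
  have key : a * (p + r)⁻¹ + a * (p + s)⁻¹ + a * (p + t)⁻¹ = 0 := by
    apply sum_zero h2 x y _ _ _ hx hy hxy
    intro z hz hzz
    have mz : ![p * z, z] ∈ U := by
      rcases hzz with rfl | rfl | rfl
      · exact mx
      · exact my
      · simpa [mul_add] using U.add_mem mx my
    have := U.add_mem mz ma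
    have q := hU _ this (by intro h0; exact hz (by simpa using congrFun h0 1))
    simp only [Matrix.cons_add_cons, Matrix.add_cons, Pi.add_apply, Matrix.cons_val_zero,
      Matrix.cons_val_one, add_zero] at q
    rcases q with q | q | q | q | q
    · exact absurd q hz
    · exact absurd (by linear_combination q) ha
    · left; rw [eq_mul_inv_iff_mul_eq₀ nr]; linear_combination q - h2 a + h2 (z*r)
    · right; left; rw [eq_mul_inv_iff_mul_eq₀ ns]; linear_combination q - h2 a + h2 (z*s)
    · right; right; rw [eq_mul_inv_iff_mul_eq₀ nt]; linear_combination q - h2 a + h2 (z*t)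
  have : a * ((p + r)⁻¹ + (p + s)⁻¹ + (p + t)⁻¹) = 0 := by linear_combination key
  exact (mul_eq_zero.1 this).resolve_left ha

theorem forward {K : Type*} [Field K] (h2 : ∀ x : K, x + x = 0) (p r s t : K)
    (hpr : p ≠ r) (hps : p ≠ s) (hpt : p ≠ t) (hrs : r ≠ s) (hrt : r ≠ t) (hst : s ≠ t)
    (U : AddSubgroup (Fin 2 → K))
    (hU : ∀ u ∈ U, u ≠ 0 → (u 1 = 0 ∨ u 0 = p * u 1 ∨ u 0 = r * u 1 ∨ u 0 = s * u 1 ∨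
        u 0 = t * u 1))
    (hI : ∃ a : K, a ≠ 0 ∧ ![a, 0] ∈ U)
    (hF : ∀ z, (z = p ∨ z = r ∨ z = s ∨ z = t) → ∃ a : K, a ≠ 0 ∧ ![z * a, a] ∈ U) :
    (p + r) + (p + s) + (p + t) = 0 ∨
    (p + r)⁻¹ + (p + s)⁻¹ + (p + t)⁻¹ = 0 ∨
    (r + p)⁻¹ + (r + s)⁻¹ + (r + t)⁻¹ = 0 ∨
    (s + p)⁻¹ + (s + r)⁻¹ + (s + t)⁻¹ = 0 ∨
    (t + p)⁻¹ + (t + r)⁻¹ + (t + s)⁻¹ = 0 := by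
  obtain ⟨a, ha, ma⟩ := hI
  obtain ⟨b, hb, mb⟩ := hF p (by simp)
  obtain ⟨c, hc, mc⟩ := hF r (by simp)
  obtain ⟨d, hd, md⟩ := hF s (by simp)
  obtain ⟨e, he, me⟩ := hF t (by simp)
  by_contra hcon
  push Not at hcon
  obtain ⟨n0, n1, n2, n3, n4⟩ := hcon
  have ua : ∀ x, x ≠ 0 → ![x, 0] ∈ U → x = a := by
    intro x hx mx
    by_contra hxa
    apply n0
    have key : b * (p + r) + b * (p + s) + b * (p + t) = 0 := by
      apply sum_zero h2 x a _ _ _ hx ha hxa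
      intro z hz hzz
      have mz : ![z, 0] ∈ U := by
        rcases hzz with rfl | rfl | rfl
        · exact mx
        · exact ma
        · simpa using U.add_mem mx ma
      have := U.add_mem mz mb
      have q := hU _ this (by intro h0; exact hb (by simpa using congrFun h0 1))
      simp only [Matrix.cons_add_cons, Matrix.add_cons, Pi.add_apply, Matrix.cons_val_zero,
        Matrix.cons_val_one, zero_add] at q
      rcases q with q | q | q | q | q
      · exact absurd q hb
      · exact absurd (by linear_combination q) hz
      · left; linear_combination q - h2 (p * b)
      · right; left; linear_combination q - h2 (p * b)
      · right; right; linear_combination q - h2 (p * b)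
    have : b * ((p + r) + (p + s) + (p + t)) = 0 := by linear_combination key
    exact (mul_eq_zero.1 this).resolve_left hb
  have ub : ∀ x, x ≠ 0 → ![p * x, x] ∈ U → x = b := by
    intro x hx mx
    by_contra hxa
    exact n1 (fin_cond h2 p r s t hpr hps hpt U hU a ha ma x b hx hb hxa mx mb)
  have uc : ∀ x, x ≠ 0 → ![r * x, x] ∈ U → x = c := by
    intro x hx mx
    by_contra hxa
    exact n2 (fin_cond h2 r p s t hpr.symm hrs hrt U
      (fun u m n => by have := hU u m n; tauto) a ha ma x c hx hc hxa mx mc)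
  have ud : ∀ x, x ≠ 0 → ![s * x, x] ∈ U → x = d := by
    intro x hx mx
    by_contra hxa
    exact n3 (fin_cond h2 s p r t hps.symm hrs.symm hst U
      (fun u m n => by have := hU u m n; tauto) a ha ma x d hx hd hxa mx md)
  have ue : ∀ x, x ≠ 0 → ![t * x, x] ∈ U → x = e := by
    intro x hx mx
    by_contra hxa
    exact n4 (fin_cond h2 t p r s hpt.symm hrt.symm hst.symm U
      (fun u m n => by have := hU u m n; tauto) a ha ma x e hx he hxa mx me)
  have nz : ∀ z x : K, x ≠ 0 → ![z * x, x] ≠ 0 := by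
    intro z x hx h0; exact hx (by simpa using congrFun h0 1)
  have na : ∀ z x : K, x ≠ 0 → ![a, 0] ≠ ![z * x, x] := by
    intro z x hx h0; exact hx (by simpa using (congrFun h0 1).symm)
  have nn : ∀ z w x y : K, z ≠ w → x ≠ 0 → ![z * x, x] ≠ ![w * y, y] := by
    intro z w x y hzw hx h0
    have e1 : x = y := by simpa using congrFun h0 1
    have e0 : z * x = w * y := by simpa using congrFun h0 0
    subst e1
    exact hzw (mul_right_cancel₀ hx e0)
  refine five (fun v => funext fun i => h2 (v i)) U ![a, 0] ![p * b, b] ![r * c, c] ![s * d, d]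
    ![t * e, e] ?_ (nz _ _ hb) (nz _ _ hc) (nz _ _ hd) (nz _ _ he) (na _ _ hb) (na _ _ hc)
    (na _ _ hd) (na _ _ he) (nn _ _ _ _ hpr hb) (nn _ _ _ _ hps hb) (nn _ _ _ _ hpt hb)
    (nn _ _ _ _ hrs hc) (nn _ _ _ _ hrt hc) (nn _ _ _ _ hst hd) ma mb mc md ?_
  · intro h0; exact ha (by simpa using congrFun h0 0)
  · intro u mu
    by_cases hu : u = 0
    · exact Or.inl hu
    right
    have mk : ∀ z, u 0 = z * u 1 → u = ![z * u 1, u 1] ∧ u 1 ≠ 0 := by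
      intro z hz
      refine ⟨by funext i; fin_cases i <;> simp [hz], fun h => hu ?_⟩
      funext i; fin_cases i <;> simp [hz, h]
    rcases hU u mu hu with q | q | q | q | q
    · left
      have e1 : u = ![u 0, 0] := by funext i; fin_cases i <;> simp [q]
      have := ua (u 0) (fun h => hu (by rw [e1, h]; funext i; fin_cases i <;> simp)) (e1 ▸ mu)
      rw [e1, this]
    · obtain ⟨e1, e2⟩ := mk _ q
      have := ub _ e2 (e1 ▸ mu)
      rw [this] at e1; tauto
    · obtain ⟨e1, e2⟩ := mk _ q
      have := uc _ e2 (e1 ▸ mu)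
      rw [this] at e1; tauto
    · obtain ⟨e1, e2⟩ := mk _ q
      have := ud _ e2 (e1 ▸ mu)
      rw [this] at e1; tauto
    · obtain ⟨e1, e2⟩ := mk _ q
      have := ue _ e2 (e1 ▸ mu)
      rw [this] at e1; tauto

/-- the additive subgroup `{0,l,m,n}` when `l+m+n=0` -/
def klein {K : Type*} [Field K] (h2 : ∀ x : K, x + x = 0) (l m n : K) (h : l + m + n = 0) :
    AddSubgroup K where
  carrier := {x | x = 0 ∨ x = l ∨ x = m ∨ x = n}
  zero_mem' := Or.inl rfl
  add_mem' := by
    intro x y hx hy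
    have := h2 l
    have := h2 m
    have := h2 n
    simp only [Set.mem_setOf_eq] at *
    rcases hx with rfl | rfl | rfl | rfl <;> rcases hy with rfl | rfl | rfl | rfl <;> grind
  neg_mem' := by
    intro x hx
    have e : -x = x := by linear_combination - h2 x
    simpa [e] using hx

theorem backward_fin {K : Type*} [Field K] (h2 : ∀ x : K, x + x = 0) (p r s t : K)
    (hr : p ≠ r) (hs : p ≠ s) (ht : p ≠ t)
    (h : (p + r)⁻¹ + (p + s)⁻¹ + (p + t)⁻¹ = 0) :
    ∃ U : AddSubgroup (Fin 2 → K),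
      (∀ u ∈ U, u ≠ 0 → (u 1 = 0 ∨ u 0 = p * u 1 ∨ u 0 = r * u 1 ∨ u 0 = s * u 1 ∨
        u 0 = t * u 1)) ∧
      (∃ a : K, a ≠ 0 ∧ ![a, 0] ∈ U) ∧
      ∀ z, (z = p ∨ z = r ∨ z = s ∨ z = t) → ∃ a : K, a ≠ 0 ∧ ![z * a, a] ∈ U := by
  have nr := add_ne h2 hr
  have ns := add_ne h2 hs
  have nt := add_ne h2 ht
  let f0 : (Fin 2 → K) →+ K := Pi.evalAddMonoidHom _ 0
  let f1 : (Fin 2 → K) →+ K := Pi.evalAddMonoidHom _ 1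
  let g : (Fin 2 → K) →+ K := f0 + (AddMonoidHom.mulLeft p).comp f1
  have hk : (1 : K) + 1 + 0 = 0 := by rw [h2, add_zero]
  refine ⟨(klein h2 _ _ _ h).comap f1 ⊓ (klein h2 1 1 0 hk).comap g, ?_, ?_, ?_⟩
  · intro u hu _
    have hu1 : u 1 = 0 ∨ u 1 = (p + r)⁻¹ ∨ u 1 = (p + s)⁻¹ ∨ u 1 = (p + t)⁻¹ := hu.1
    have hu2 : u 0 + p * u 1 = 0 ∨ u 0 + p * u 1 = 1 ∨ u 0 + p * u 1 = 1 ∨ u 0 + p * u 1 = 0 :=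
      hu.2
    have hu3 : u 0 + p * u 1 = 0 ∨ u 0 + p * u 1 = 1 := by tauto
    rcases hu3 with e | e
    · right; left; linear_combination e - h2 (p * u 1)
    · have w : ∀ z, p + z ≠ 0 → u 1 = (p + z)⁻¹ → u 0 = z * u 1 := by
        intro z hz hq
        have : (p + z) * u 1 = 1 := by rw [hq]; exact mul_inv_cancel₀ hz
        linear_combination e - this + h2 (z * u 1) - h2 (z * u 1)
      rcases hu1 with q | q | q | q
      · exact Or.inl q
      · have := w _ nr q; tauto
      · have := w _ ns q; tauto
      · have := w _ nt q; tauto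
  · refine ⟨1, one_ne_zero, ?_, ?_⟩
    · exact Or.inl rfl
    · right; left; simp [g, f0, f1]
  · have w : ∀ z, p + z ≠ 0 → z * (p + z)⁻¹ + p * (p + z)⁻¹ = 1 := by
      intro z hz
      rw [← add_mul, add_comm z p, mul_inv_cancel₀ hz]
    intro z hz
    rcases hz with rfl | rfl | rfl | rfl
    · refine ⟨(z + r)⁻¹, inv_ne_zero nr, ?_, ?_⟩
      · right; left; rfl
      · left; exact h2 _
    · refine ⟨_, inv_ne_zero nr, ?_, ?_⟩
      · right; left; rfl
      · right; left; exact w _ nr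
    · refine ⟨_, inv_ne_zero ns, ?_, ?_⟩
      · right; right; left; rfl
      · right; left; exact w _ ns
    · refine ⟨_, inv_ne_zero nt, ?_, ?_⟩
      · right; right; right; rfl
      · right; left; exact w _ nt

theorem backward_inf {K : Type*} [Field K] (h2 : ∀ x : K, x + x = 0) (p r s t : K)
    (hr : p ≠ r)
    (h : (p + r) + (p + s) + (p + t) = 0) :
    ∃ U : AddSubgroup (Fin 2 → K),
      (∀ u ∈ U, u ≠ 0 → (u 1 = 0 ∨ u 0 = p * u 1 ∨ u 0 = r * u 1 ∨ u 0 = s * u 1 ∨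
        u 0 = t * u 1)) ∧
      (∃ a : K, a ≠ 0 ∧ ![a, 0] ∈ U) ∧
      ∀ z, (z = p ∨ z = r ∨ z = s ∨ z = t) → ∃ a : K, a ≠ 0 ∧ ![z * a, a] ∈ U := by
  have nr := add_ne h2 hr
  let f0 : (Fin 2 → K) →+ K := Pi.evalAddMonoidHom _ 0
  let f1 : (Fin 2 → K) →+ K := Pi.evalAddMonoidHom _ 1
  let g : (Fin 2 → K) →+ K := f0 + (AddMonoidHom.mulLeft p).comp f1
  have hk : (1 : K) + 1 + 0 = 0 := by rw [h2, add_zero]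
  refine ⟨(klein h2 _ _ _ h).comap g ⊓ (klein h2 1 1 0 hk).comap f1, ?_, ?_, ?_⟩
  · intro u hu _
    have hu1 : u 0 + p * u 1 = 0 ∨ u 0 + p * u 1 = p + r ∨ u 0 + p * u 1 = p + s ∨
      u 0 + p * u 1 = p + t := hu.1
    have hu2 : u 1 = 0 ∨ u 1 = 1 ∨ u 1 = 1 ∨ u 1 = 0 := hu.2
    have hu3 : u 1 = 0 ∨ u 1 = 1 := by tauto
    rcases hu3 with e | e
    · exact Or.inl e
    · right
      rw [e] at hu1 ⊢
      rcases hu1 with q | q | q | q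
      · left; linear_combination q - h2 p
      · right; left; linear_combination q
      · right; right; left; linear_combination q
      · right; right; right; linear_combination q
  · refine ⟨p + r, nr, ?_, ?_⟩
    · right; left; simp [g, f0, f1]
    · exact Or.inl rfl
  · intro z hz
    refine ⟨1, one_ne_zero, ?_, ?_⟩
    · have : z * 1 + p * 1 = 0 ∨ z * 1 + p * 1 = p + r ∨ z * 1 + p * 1 = p + s ∨
        z * 1 + p * 1 = p + t := by
        rcases hz with rfl | rfl | rfl | rfl
        · left; exact h2 _
        · right; left; ring
        · right; right; left; ring
        · right; right; right; ring
      exact this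
    · right; left; rfl

/-- Lemma 3.3 combined with Theorem 3.2: with `γ = (β+1)/(αβ+1)`, the set
`C = {(1:0),(0:1),(1:1),(γ:1),(β+1:1)} ⊆ PG(1,q)` is `F₂`-linear iff
`α ∈ {1/β², 1+1/β, β, 1/√β, 1/(β+1)}`; the condition `α = 1/√β` is encoded as `α²β = 1`. -/
theorem secants_linear_iff_translation
    {K : Type*} [Field K] [Fintype K] (h : ℕ)
    (hcard : Fintype.card K = 2 ^ h)
    (α β : K) (hα0 : α ≠ 0) (hα1 : α ≠ 1) (hβ0 : β ≠ 0) (hβ1 : β ≠ 1) (hαβ : α * β ≠ 1)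
    (γ : K) (hγ : γ = (β + 1) / (α * β + 1)) :
    IsF2Linear ({pt2 (1 : K) 0 (by simp), pt2 (0 : K) 1 (by simp), pt2 (1 : K) 1 (by simp),
        pt2 γ 1 (by simp), pt2 (β + 1) 1 (by simp)} : Set (Projectivization K (Fin 2 → K)))
      ↔ (α = 1 / β ^ 2 ∨ α = 1 + 1 / β ∨ α = β ∨ α ^ 2 * β = 1 ∨ α = 1 / (β + 1)) := by
  have two : (2 : K) = 0 := by
    have h0 : ((Fintype.card K : ℕ) : K) = 0 := Nat.cast_card_eq_zero K
    rw [hcard] at h0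
    push_cast at h0
    exact eq_zero_of_pow_eq_zero h0
  have h2 : ∀ x : K, x + x = 0 := fun x => by linear_combination x * two
  have nb : β + 1 ≠ 0 := add_ne h2 hβ1
  have nab : α * β + 1 ≠ 0 := add_ne h2 hαβ
  have na : α + 1 ≠ 0 := add_ne h2 hα1
  have hg : γ * (α * β + 1) = β + 1 := by rw [hγ]; exact div_mul_cancel₀ _ nab
  have g0 : 0 ≠ γ := by rintro rfl; exact nb (by linear_combination -hg)
  have g1 : 1 ≠ γ := by
    rintro rfl
    have : β * (α + 1) = 0 := by linear_combination hg + h2 β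
    exact (mul_ne_zero hβ0 na) this
  have d0 : 0 ≠ β + 1 := nb.symm
  have d1 : 1 ≠ β + 1 := by intro h; exact hβ0 (by linear_combination -h)
  have gd : γ ≠ β + 1 := by
    intro h
    rw [h] at hg
    exact mul_ne_zero nb (mul_ne_zero hα0 hβ0) (by linear_combination hg)
  have v1 : (0 + γ)⁻¹ = (α * β + 1) / (β + 1) := by rw [hγ, zero_add, inv_div]
  have v2 : (1 + γ)⁻¹ = (α * β + 1) / (β * (α + 1)) := by
    rw [inv_eq_iff_eq_inv, inv_div, eq_div_iff nab]
    linear_combination hg + h2 1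
  have v3 : (γ + (β + 1))⁻¹ = (α * β + 1) / ((β + 1) * (α * β)) := by
    rw [inv_eq_iff_eq_inv, inv_div, eq_div_iff nab]
    linear_combination hg + h2 (β + 1)
  have v4 : 1 + (β + 1) = β := by linear_combination h2 1
  have e0 : (0 + 1) + (0 + γ) + (0 + (β + 1)) = (0 : K) ↔ α = 1 / β ^ 2 := by
    rw [eq_div_iff (pow_ne_zero 2 hβ0)]
    constructor
    · intro h
      linear_combination h * (α * β + 1) - hg - (α * β + β + 1 + 1) * two
    · intro h
      have : (α * β + 1) * ((0 + 1) + (0 + γ) + (0 + (β + 1))) = 0 := by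
        linear_combination h + hg + (α * β + β + 1 + 1) * two
      exact (mul_eq_zero.1 this).resolve_left nab
  have e1 : ((0 : K) + 1)⁻¹ + (0 + γ)⁻¹ + (0 + (β + 1))⁻¹ = 0 ↔ α = 1 + 1 / β := by
    have q : ((0 : K) + 1)⁻¹ + (0 + γ)⁻¹ + (0 + (β + 1))⁻¹ = (α * β + β + 1) / (β + 1) := by
      rw [v1, zero_add, zero_add, inv_one]; field_simp; linear_combination two
    have q2 : 1 + 1 / β = (β + 1) / β := by field_simp
    rw [q, div_eq_zero_iff, or_iff_left nb, q2, eq_div_iff hβ0]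
    constructor <;> intro h
    · linear_combination h - (β + 1) * two
    · linear_combination h + (β + 1) * two
  have e2 : ((1 : K) + 0)⁻¹ + (1 + γ)⁻¹ + (1 + (β + 1))⁻¹ = 0 ↔ α = β := by
    have q : ((1 : K) + 0)⁻¹ + (1 + γ)⁻¹ + (1 + (β + 1))⁻¹ = (α + β) / (β * (α + 1)) := by
      rw [v2, v4, add_zero, inv_one]; field_simp; linear_combination (α * β + 1) * two
    rw [q, div_eq_zero_iff, or_iff_left (mul_ne_zero hβ0 na)]
    constructor <;> intro h
    · linear_combination h - β * two
    · linear_combination h + β * two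
  have e3 : (γ + 0)⁻¹ + (γ + 1)⁻¹ + (γ + (β + 1))⁻¹ = 0 ↔ α ^ 2 * β = 1 := by
    have q : (γ + 0)⁻¹ + (γ + 1)⁻¹ + (γ + (β + 1))⁻¹ =
        (α * β + 1) * (α ^ 2 * β + 1) / ((β + 1) * (α * β) * (α + 1)) := by
      rw [add_comm γ 0, add_comm γ 1, v1, v2, v3]; field_simp
      linear_combination (α * β + α) * two
    rw [q, div_eq_zero_iff, or_iff_left (mul_ne_zero (mul_ne_zero nb (mul_ne_zero hα0 hβ0)) na),
      mul_eq_zero, or_iff_right nab]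
    constructor <;> intro h
    · linear_combination h - two
    · linear_combination h + two
  have e4 : ((β + 1) + 0)⁻¹ + ((β + 1) + 1)⁻¹ + ((β + 1) + γ)⁻¹ = 0 ↔ α = 1 / (β + 1) := by
    have q : ((β + 1) + 0)⁻¹ + ((β + 1) + 1)⁻¹ + ((β + 1) + γ)⁻¹ =
        (α * (β + 1) + 1) / ((β + 1) * (α * β)) := by
      rw [add_zero, add_comm (β + 1) 1, v4, add_comm (β + 1) γ, v3]; field_simp
      linear_combination (α * β) * two
    rw [q, div_eq_zero_iff, or_iff_left (mul_ne_zero nb (mul_ne_zero hα0 hβ0)), eq_div_iff nb]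
    constructor <;> intro h
    · linear_combination h - two
    · linear_combination h + two
  rw [linear_iff, ← e0, ← e1, ← e2, ← e3, ← e4]
  constructor
  · rintro ⟨U, hU, hI, hF⟩
    exact forward h2 0 1 γ (β + 1) zero_ne_one g0 d0 g1 d1 gd U hU hI hF
  · rintro (h | h | h | h | h)
    · exact backward_inf h2 _ _ _ _ zero_ne_one h
    · exact backward_fin h2 _ _ _ _ zero_ne_one g0 d0 h
    · obtain ⟨U, hU, hI, hF⟩ := backward_fin h2 _ _ _ _ one_ne_zero g1 d1 h
      refine ⟨U, fun u m n => ?_, hI, fun z hz => hF z ?_⟩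
      · rcases hU u m n with q | q | q | q | q <;> simp only [q, true_or, or_true]
      · rcases hz with q | q | q | q <;> simp only [q, true_or, or_true]
    · obtain ⟨U, hU, hI, hF⟩ := backward_fin h2 _ _ _ _ g0.symm g1.symm gd h
      refine ⟨U, fun u m n => ?_, hI, fun z hz => hF z ?_⟩
      · rcases hU u m n with q | q | q | q | q <;> simp only [q, true_or, or_true]
      · rcases hz with q | q | q | q <;> simp only [q, true_or, or_true]
    · obtain ⟨U, hU, hI, hF⟩ := backward_fin h2 _ _ _ _ d0.symm d1.symm gd.symm h
      refine ⟨U, fun u m n => ?_, hI, fun z hz => hF z ?_⟩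
      · rcases hU u m n with q | q | q | q | q <;> simp only [q, true_or, or_true]
      · rcases hz with q | q | q | q <;> simp only [q, true_or, or_true]
end
end

section
/- Let q = 2^h and let S be a subgroup of the additive group (F_q,+) of order q/4. Suppose α ∈ F_q \ {0,1} satisfies αS = S (where αS = {αs : s ∈ S}). Then α² = α + 1 (so α ∈ F_4 \ F_2 and h is even), and S = {x ∈ F_q : Tr(μx) = 0 and Tr(αμx) = 0} for some μ ∈ F_q. Moreover, in this case, for every β ∈ F_q with β^4 ≠ β (i.e. β ∉ F_4), the additive subgroup S + βS generated by S and βS equals F_q, and for every β ∈ F_4 \ {0} one has βS = S. -/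
open scoped Classical

noncomputable section

variable {K : Type*} [Field K]

/-- The subfield of multipliers of an additive subgroup of a finite field. -/
def stabF {K : Type*} [Field K] [Fintype K] (S : AddSubgroup K) : Subfield K where
  carrier := {e | ∀ s ∈ S, e * s ∈ S}
  mul_mem' := by
    intro a b ha hb s hs
    rw [mul_assoc]
    exact ha _ (hb _ hs)
  one_mem' := by
    intro s hs
    simpa using hs
  add_mem' := by
    intro a b ha hb s hs
    rw [add_mul]
    exact S.add_mem (ha _ hs) (hb _ hs)
  zero_mem' := by
    intro s hs
    simp
  neg_mem' := by
    intro a ha s hs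
    rw [neg_mul]
    exact S.neg_mem (ha _ hs)
  inv_mem' := by
    intro a ha
    by_cases h0 : a = 0
    · subst h0
      simpa using ha
    have hpow : ∀ n : ℕ, ∀ s ∈ S, a ^ n * s ∈ S := by
      intro n
      induction n with
      | zero => intro s hs; simpa using hs
      | succ k ih =>
        intro s hs
        rw [pow_succ, mul_assoc]
        exact ih _ (ha s hs)
    have h1 : a⁻¹ = a ^ (Fintype.card K - 2) := by
      have h2 := FiniteField.pow_card_sub_one_eq_one a h0
      have h3 : 1 < Fintype.card K := Fintype.one_lt_card
      symm
      apply eq_inv_of_mul_eq_one_left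
      rw [← pow_succ, ← h2]
      congr 1
      omega
    rw [h1]
    exact hpow _

theorem mem_stabF {K : Type*} [Field K] [Fintype K] (S : AddSubgroup K) (e : K) :
    e ∈ stabF S ↔ ∀ s ∈ S, e * s ∈ S := Iff.rfl

/-- An additive subgroup stable under a subfield, as a submodule. -/
def stabSub {K : Type*} [Field K] (E : Subfield K) (T : AddSubgroup K)
    (hT : ∀ e ∈ E, ∀ t ∈ T, e * t ∈ T) : Submodule E K :=
  { T with smul_mem' := fun c t ht => hT c.1 c.2 t ht }

theorem mem_smulSub {K : Type*} [Field K] (β : K) (S : AddSubgroup K) (x : K) :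
    x ∈ smulSub β S ↔ ∃ s ∈ S, β * s = x := by
  simp [smulSub]

theorem smulSub_eq_of_mem {K : Type*} [Field K] [Fintype K] (S : AddSubgroup K) (β : K)
    (h0 : β ≠ 0) (hβ : β ∈ stabF S) : smulSub β S = S := by
  ext x
  rw [mem_smulSub]
  constructor
  · rintro ⟨s, hs, rfl⟩
    exact hβ s hs
  · intro hx
    exact ⟨β⁻¹ * x, (stabF S).inv_mem hβ x hx, by field_simp⟩

theorem card_stab {K : Type*} [Field K] [Fintype K] (h : ℕ)
    (hcard : Fintype.card K = 2 ^ h)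
    (S : AddSubgroup K) (hS : Nat.card S = 2 ^ h / 4)
    (α : K) (hα0 : α ≠ 0) (hα1 : α ≠ 1) (hα : α ∈ stabF S) :
    Nat.card (stabF S) = 4 ∧ IsCoatom (stabSub (stabF S) S (fun e he t ht => he t ht)) := by
  set S' := stabSub (stabF S) S (fun e he t ht => he t ht) with hS'
  have hq : 4 * (2 ^ h / 4) = 2 ^ h := by
    have hpos : 0 < Nat.card S := Nat.card_pos
    rw [hS] at hpos
    have : 2 ≤ h := by
      by_contra hlt
      have : h = 0 ∨ h = 1 := by omega
      rcases this with rfl | rfl <;> simp at hpos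
    obtain ⟨k, rfl⟩ := Nat.exists_eq_add_of_le this
    rw [pow_add]
    omega
  have hcS : Nat.card S' = 2 ^ h / 4 := hS
  have h1 := Submodule.card_eq_card_quotient_mul_card S'
  rw [hcS, Nat.card_eq_fintype_card, hcard] at h1
  have hpos : 0 < 2 ^ h / 4 := by rw [← hS]; exact Nat.card_pos
  have h4 : Nat.card (K ⧸ S') = 4 := by
    apply Nat.eq_of_mul_eq_mul_left hpos
    rw [← h1]
    omega
  have h5 : Nat.card (K ⧸ S') = Nat.card (stabF S) ^ Module.finrank (stabF S) (K ⧸ S') :=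
    Module.natCard_eq_pow_finrank
  have h3 : 3 ≤ Nat.card (stabF S) := by
    have hsub : ({0, 1, α} : Finset K) ⊆ Finset.univ.filter (fun x => x ∈ stabF S) := by
      intro x hx
      simp only [Finset.mem_insert, Finset.mem_singleton] at hx
      simp only [Finset.mem_filter, Finset.mem_univ, true_and]
      rcases hx with rfl | rfl | rfl
      · exact zero_mem _
      · exact one_mem _
      · exact hα
    have hc := Finset.card_le_card hsub
    rw [Finset.card_insert_of_notMem (by simp [hα0.symm]),
      Finset.card_insert_of_notMem (by simp [hα1.symm]), Finset.card_singleton] at hc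
    rw [Nat.card_eq_fintype_card, Fintype.card_subtype]
    exact hc
  rw [h4] at h5
  have hd : Module.finrank (stabF S) (K ⧸ S') = 1 := by
    generalize Module.finrank (stabF S) (K ⧸ S') = d at h5
    generalize Nat.card (stabF S) = n at h5 h3
    rcases d with _ | _ | d
    · simp at h5
    · rfl
    · exfalso
      have : 3 ^ 2 ≤ n ^ (d + 1 + 1) :=
        (Nat.pow_le_pow_left h3 2).trans (Nat.pow_le_pow_right (by omega) (by omega))
      omega
  refine ⟨?_, ?_⟩
  · rw [hd, pow_one] at h5
    exact h5.symm
  · rw [← isSimpleModule_iff_isCoatom, isSimpleModule_iff_finrank_eq_one]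
    exact hd

theorem Tr_eq_trace {K : Type*} [Field K] [Fintype K] [Algebra (ZMod 2) K] (h : ℕ)
    (hcard : Fintype.card K = 2 ^ h) (x : K) :
    Tr h x = 0 ↔ Algebra.trace (ZMod 2) K x = 0 := by
  have hf : Module.finrank (ZMod 2) K = h := by
    have := Module.card_eq_pow_finrank (K := ZMod 2) (V := K)
    rw [hcard, ZMod.card] at this
    exact (Nat.pow_right_injective le_rfl this).symm
  have h1 := FiniteField.algebraMap_trace_eq_sum_pow (ZMod 2) K x
  rw [hf, Nat.card_zmod] at h1
  rw [Tr, ← h1]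
  simp

theorem Tr_add {K : Type*} [Field K] [CharP K 2] (h : ℕ) (x y : K) :
    Tr h (x + y) = Tr h x + Tr h y := by
  simp only [Tr, ← Finset.sum_add_distrib]
  refine Finset.sum_congr rfl fun i _ => ?_
  exact add_pow_char_pow x y 2 i

/-- A proper subgroup is annihilated by a nonzero `μ`, and the trace is nondegenerate. -/
theorem exists_ann {K : Type*} [Field K] [Fintype K] [CharP K 2] (h : ℕ)
    (hcard : Fintype.card K = 2 ^ h) (S : AddSubgroup K) (hS : S ≠ ⊤) :
    ∃ μ : K, (∀ s ∈ S, Tr h (μ * s) = 0) ∧ ∃ x, Tr h (μ * x) ≠ 0 := by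
  letI : Algebra (ZMod 2) K := ZMod.algebra K 2
  have hlt : AddSubgroup.toZModSubmodule 2 S < ⊤ := by
    rw [lt_top_iff_ne_top]
    intro ht
    apply hS
    ext x
    have : x ∈ AddSubgroup.toZModSubmodule 2 S := by rw [ht]; trivial
    simpa using this
  obtain ⟨f, hf0, hf⟩ := Submodule.exists_le_ker_of_lt_top _ hlt
  have hn := traceForm_nondegenerate (ZMod 2) K
  obtain ⟨μ, hμ⟩ := (LinearMap.BilinForm.toDual _ hn).surjective f
  have key : ∀ x, Tr h (μ * x) = 0 ↔ f x = 0 := by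
    intro x
    rw [Tr_eq_trace h hcard, ← hμ, LinearMap.BilinForm.toDual_def, Algebra.traceForm_apply]
  refine ⟨μ, fun s hs => (key s).2 (hf (by simpa using hs)), ?_⟩
  by_contra! hc
  exact hf0 (LinearMap.ext fun x => (key x).1 (hc x))

/-- Lemma 3.6: if `S` has order `q/4` and `αS = S` for some
`α ∉ {0,1}`, then `α² = α + 1` (so `α ∈ F₄ \ F₂` and `h` is even),
`S = {x | Tr(μx) = Tr(αμx) = 0}` for some `μ`, `S + βS = F_q` for every `β ∉ F₄`,
and `βS = S` for every `β ∈ F₄ \ {0}`. -/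
theorem S_eq_alphaS
    {K : Type*} [Field K] [Fintype K] (h : ℕ)
    (hcard : Fintype.card K = 2 ^ h)
    (S : AddSubgroup K) (hS : Nat.card S = 2 ^ h / 4)
    (α : K) (hα0 : α ≠ 0) (hα1 : α ≠ 1) (hαS : smulSub α S = S) :
    α ^ 2 = α + 1 ∧ Even h ∧
    (∃ μ : K, (S : Set K) = {x : K | Tr h (μ * x) = 0 ∧ Tr h (α * μ * x) = 0}) ∧
    (∀ β : K, β ^ 4 ≠ β → S ⊔ smulSub β S = (⊤ : AddSubgroup K)) ∧
    (∀ β : K, β ≠ 0 → β ^ 4 = β → smulSub β S = S) := by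
  haveI : CharP K 2 := charP_of_card_eq_prime_pow hcard
  have h2 : (2 : K) = 0 := CharTwo.two_eq_zero
  have hαm : α ∈ stabF S := by
    intro s hs
    rw [← hαS, mem_smulSub]
    exact ⟨s, hs, rfl⟩
  obtain ⟨hc4, hco⟩ := card_stab h hcard S hS α hα0 hα1 hαm
  have hE4 : ∀ e ∈ stabF S, e ^ 4 = e := by
    intro e he
    have h1 := FiniteField.pow_card (⟨e, he⟩ : stabF S)
    rw [← Nat.card_eq_fintype_card, hc4] at h1
    exact congrArg Subtype.val h1
  have hα2 : α ^ 2 = α + 1 := by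
    have h4 := hE4 α hαm
    have hz : α * (α - 1) * (α ^ 2 + α + 1) = 0 := by linear_combination h4
    have hz' := (mul_eq_zero.1 hz).resolve_left (mul_ne_zero hα0 (sub_ne_zero.2 hα1))
    linear_combination hz' - (α + 1) * h2
  have h4E : ∀ β : K, β ^ 4 = β → β = 0 ∨ β = 1 ∨ β = α ∨ β = α + 1 := by
    intro β hβ
    have hz : β * ((β - 1) * ((β - α) * (β - (α + 1)))) = 0 := by
      linear_combination hβ + (β ^ 2 - β) * hα2 + (-α * β ^ 3 + 2 * α * β ^ 2
        - β ^ 3 + β ^ 2 - α * β) * h2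
    simpa [sub_eq_zero] using hz
  have hmem : ∀ β : K, β ^ 4 = β → β ∈ stabF S := by
    intro β hβ
    rcases h4E β hβ with rfl | rfl | rfl | rfl
    · exact zero_mem _
    · exact one_mem _
    · exact hαm
    · exact add_mem hαm (one_mem _)
  have hcoat : ∀ T : AddSubgroup K, S ≤ T → (∀ t ∈ T, α * t ∈ T) → T = S ∨ T = ⊤ := by
    intro T hST hT
    have hTE : ∀ e ∈ stabF S, ∀ t ∈ T, e * t ∈ T := by
      intro e he t ht
      rcases h4E e (hE4 e he) with rfl | rfl | rfl | rfl
      · simp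
      · simpa using ht
      · exact hT t ht
      · rw [add_mul, one_mul]
        exact T.add_mem (hT t ht) ht
    have hle : stabSub (stabF S) S (fun e he t ht => he t ht) ≤ stabSub (stabF S) T hTE := hST
    rcases hco.le_iff.1 hle with h1 | h1
    · right
      ext x
      have : x ∈ stabSub (stabF S) T hTE := by rw [h1]; trivial
      exact ⟨fun _ => trivial, fun _ => this⟩
    · left
      ext x
      exact SetLike.ext_iff.1 h1 x
  have hStop : S ≠ ⊤ := by
    rintro rfl
    apply hco.1
    ext x
    exact ⟨fun _ => trivial, fun _ => trivial⟩
  refine ⟨hα2, ?_, ?_, ?_, fun β h0 hβ => smulSub_eq_of_mem S β h0 (hmem β hβ)⟩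
  · have h3 : α ^ 3 = 1 := by linear_combination (α + 1) * hα2 + α * h2
    have ho : orderOf α = 3 := orderOf_eq_prime h3 hα1
    have hd : 3 ∣ 2 ^ h - 1 := by
      rw [← ho, ← hcard]
      exact orderOf_dvd_of_pow_eq_one (FiniteField.pow_card_sub_one_eq_one α hα0)
    by_contra hodd
    rw [Nat.not_even_iff_odd] at hodd
    obtain ⟨k, rfl⟩ := hodd
    have h4 : 4 ^ k % 3 = 1 := by
      rw [Nat.pow_mod]
      simp
    rw [pow_succ, pow_mul] at hd
    norm_num at hd
    omega
  · obtain ⟨μ, hμ, x₀, hx₀⟩ := exists_ann h hcard S hStop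
    refine ⟨μ, ?_⟩
    have hT0 : Tr h (0 : K) = 0 := by simp [Tr]
    let U : AddSubgroup K :=
      { carrier := {x : K | Tr h (μ * x) = 0 ∧ Tr h (α * μ * x) = 0}
        add_mem' := by
          rintro x y ⟨h1, h3⟩ ⟨h4, h5⟩
          refine ⟨?_, ?_⟩
          · rw [mul_add, Tr_add, h1, h4, add_zero]
          · rw [mul_add, Tr_add, h3, h5, add_zero]
        zero_mem' := by simp [hT0]
        neg_mem' := by
          rintro x hx
          rw [CharTwo.neg_eq]
          exact hx }
    have hU : U = S ∨ U = ⊤ := by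
      apply hcoat
      · intro s hs
        refine ⟨hμ s hs, ?_⟩
        rw [mul_comm α μ, mul_assoc]
        exact hμ _ (hαm s hs)
      · rintro t ⟨h1, h3⟩
        refine ⟨?_, ?_⟩
        · rw [← mul_assoc, mul_comm μ α]
          exact h3
        · have : α * μ * (α * t) = α * μ * t + μ * t := by
            linear_combination μ * t * hα2
          rw [this, Tr_add, h1, h3, add_zero]
    rcases hU with hU | hU
    · rw [← hU]
      rfl
    · exfalso
      have : x₀ ∈ U := by rw [hU]; trivial
      exact hx₀ this.1
  · intro β hβ
    have hst : ∀ t ∈ S ⊔ smulSub β S, α * t ∈ S ⊔ smulSub β S := by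
      intro t ht
      obtain ⟨a, ha, b, hb, rfl⟩ := AddSubgroup.mem_sup.1 ht
      obtain ⟨s, hs, rfl⟩ := (mem_smulSub _ _ _).1 hb
      refine AddSubgroup.mem_sup.2 ⟨α * a, hαm a ha, β * (α * s),
        (mem_smulSub _ _ _).2 ⟨_, hαm s hs, rfl⟩, by ring⟩
    rcases hcoat (S ⊔ smulSub β S) le_sup_left hst with h1 | h1
    · exfalso
      apply hβ
      apply hE4
      intro s hs
      have : β * s ∈ S ⊔ smulSub β S :=
        (le_sup_right : smulSub β S ≤ S ⊔ smulSub β S) ((mem_smulSub _ _ _).2 ⟨s, hs, rfl⟩)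
      rwa [h1] at this
    · exact h1
end
end
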